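/- Every 9-dimensional finite-volume right-angled convex hyperbolic polyhedron has at least 152 facets, and every 11-dimensional finite-volume right-angled convex hyperbolic polyhedron has at least 564 facets. -/

import Mathlib

open scoped BigOperators

noncomputable section

/-- The Minkowski bilinear form `⟨x,y⟩ = -x₀y₀ + x₁y₁ + ⋯ + xₙyₙ` on `ℝ^{n+1}`. -/
def mink {n : ℕ} (x y : Fin (n + 1) → ℝ) : ℝ :=
  -(x 0 * y 0) + ∑ i : Fin n, x i.succ * y i.succ

/-- The hyperboloid model of the hyperbolic space `ℍⁿ`. -/
def Hyperboloid (n : ℕ) : Set (Fin (n + 1) → ℝ) :=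
  {x | mink x x = -1 ∧ 0 < x 0}

/-- The Klein projection `x ↦ (x₁/x₀, …, xₙ/x₀)` of the hyperboloid onto the unit ball. -/
def kleinMap {n : ℕ} (x : Fin (n + 1) → ℝ) : EuclideanSpace ℝ (Fin n) :=
  WithLp.toLp 2 fun i => x i.succ / x 0

/-- Dimension of a subset of a real vector space: the rank of its vector span. -/
def sdim {n : ℕ} (s : Set (EuclideanSpace ℝ (Fin n))) : ℕ :=
  Module.finrank ℝ (vectorSpan ℝ s)

/-- A convex hyperbolic `n`-polyhedron: a finite intersection of hyperbolic half-spaces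
`H_{eᵢ}⁻ = {x : ⟨eᵢ,x⟩ ≤ 0}` (with `⟨eᵢ,eᵢ⟩ = 1`) having nonempty interior
(equivalently, its Klein-model image has nonempty interior in `ℝⁿ`). -/
structure HypPolyhedron (n : ℕ) where
  m : ℕ
  e : Fin m → (Fin (n + 1) → ℝ)
  unit : ∀ i, mink (e i) (e i) = 1
  nonempty_int :
    (interior (kleinMap '' {x ∈ Hyperboloid n | ∀ i, mink (e i) x ≤ 0})).Nonempty

namespace HypPolyhedron

variable {n : ℕ} (P : HypPolyhedron n)

/-- The set of points of the polyhedron in the hyperboloid model. -/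
def carrier : Set (Fin (n + 1) → ℝ) :=
  {x ∈ Hyperboloid n | ∀ i, mink (P.e i) x ≤ 0}

/-- `P̄`: the closure of the Klein-model image of the polyhedron in the closed unit ball. -/
def cl : Set (EuclideanSpace ℝ (Fin n)) :=
  closure (kleinMap '' P.carrier)

/-- The `k`-faces of `P`: the `k`-dimensional (nonempty) exposed faces of `P̄`. -/
def faces (k : ℕ) : Set (Set (EuclideanSpace ℝ (Fin n))) :=
  {F | IsExposed ℝ P.cl F ∧ F.Nonempty ∧ sdim F = k}

/-- `a_k(P)`: the number of `k`-faces of `P`. -/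
def a (k : ℕ) : ℕ := (P.faces k).ncard

/-- Vertices of `P`: the points of `0`-dimensional exposed faces of `P̄`. -/
def verts : Set (EuclideanSpace ℝ (Fin n)) :=
  {v | IsExposed ℝ P.cl {v}}

/-- Ideal vertices: vertices lying on the unit sphere. -/
def idealVerts : Set (EuclideanSpace ℝ (Fin n)) :=
  {v ∈ P.verts | ‖v‖ = 1}

/-- Finite vertices: vertices lying in the open unit ball. -/
def finiteVerts : Set (EuclideanSpace ℝ (Fin n)) :=
  {v ∈ P.verts | ‖v‖ < 1}

/-- `v_∞(P)`: the number of ideal vertices of `P`. -/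
def vInf : ℕ := P.idealVerts.ncard

/-- The bounding hyperplane `H_e` contains the face `F`. -/
def faceInHyperplane (e : Fin (n + 1) → ℝ) (F : Set (EuclideanSpace ℝ (Fin n))) : Prop :=
  ∀ x ∈ P.carrier, kleinMap x ∈ F → mink e x = 0

/-- `P` is right-angled: whenever two distinct bounding hyperplanes both contain an
`(n-2)`-dimensional face of `P`, the corresponding unit normals are orthogonal,
i.e. the dihedral angle is `π/2`. -/
def IsRightAngled : Prop :=
  ∀ i j : Fin P.m, i ≠ j →
    (∃ F ∈ P.faces (n - 2), P.faceInHyperplane (P.e i) F ∧ P.faceInHyperplane (P.e j) F) →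
    mink (P.e i) (P.e j) = 0

/-- `P` has finite volume: `P̄` is the convex hull of its (finitely many) vertices. -/
def FiniteVolume : Prop :=
  P.verts.Finite ∧ P.cl = convexHull ℝ P.verts

/-- `P` is compact: finite volume and all vertices are finite. -/
def IsCompactPoly : Prop :=
  P.FiniteVolume ∧ ∀ v ∈ P.verts, ‖v‖ < 1

/-- `P` is ideal: finite volume and all vertices are ideal. -/
def IsIdeal : Prop :=
  P.FiniteVolume ∧ ∀ v ∈ P.verts, ‖v‖ = 1

end HypPolyhedron

/-- `ν(P) = a_{n-1}(P) + v_∞(P)` ranging over the family `𝒫ⁿ` of finite-volume non-compact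
right-angled convex hyperbolic `n`-polyhedra. -/
def nuSet (n : ℕ) : Set ℕ :=
  {m | ∃ P : HypPolyhedron n,
        P.FiniteVolume ∧ P.IsRightAngled ∧ ¬ P.IsCompactPoly ∧ P.a (n - 1) + P.vInf = m}

/-- `νₙ = sInf {ν(P) : P ∈ 𝒫ⁿ}` (with `sInf ∅ = 0`). -/
def nu (n : ℕ) : ℕ := sInf (nuSet n)

/-!
Distinct facets of a right-angled polyhedron of finite volume have unit normals with product `0` or
at most `-1`, and the cone over the polyhedron lies in the closed future light cone; the number of
facets is bounded from these two facts alone.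

At an ideal vertex `p` of an `n`-dimensional polyhedron the facets through `p` form an
`(n - 1)`-cube, so there are `2 (n - 1)` of them. No facet away from `p` is orthogonal to two
opposite facets through `p`, so the number of facets away from `p` at least doubles with each
dimension of the faces through `p`. A `2`-dimensional face has at least one, but a `6`-dimensional
face has more than sixteen: if there were only sixteen, then seen from `p` they would be unit
hemispheres centred at vertices of a unit `5`-cube, and these do not reach its centre, which is at
distance `√5 / 2`. This gives `2 (n - 1) + 17 * 2 ^ (n - 6)` facets.

Without ideal vertices, the sets of pairwise orthogonal normals are the simplices of an
`(n - 1)`-sphere without induced squares, and counting adjacent pairs of a neighbour and a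
non-neighbour of a vertex gives at least `3 * 2 ^ (n - 1) - 1` vertices by induction.
-/

/-! ### The Minkowski form -/

section Minkowski

variable {n : ℕ}

lemma mink_comm (x y : Fin (n + 1) → ℝ) : mink x y = mink y x := by
  simp only [mink, mul_comm]

@[simp] lemma mink_add_left (x y z : Fin (n + 1) → ℝ) :
    mink (x + y) z = mink x z + mink y z := by
  simp only [mink, Pi.add_apply, add_mul, Finset.sum_add_distrib]
  ring

@[simp] lemma mink_smul_left (c : ℝ) (x z : Fin (n + 1) → ℝ) :
    mink (c • x) z = c * mink x z := by
  simp only [mink, Pi.smul_apply, smul_eq_mul, mul_add, Finset.mul_sum, mul_assoc]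
  ring

@[simp] lemma mink_add_right (x y z : Fin (n + 1) → ℝ) :
    mink x (y + z) = mink x y + mink x z := by
  rw [mink_comm, mink_add_left, mink_comm y, mink_comm z]

@[simp] lemma mink_smul_right (c : ℝ) (x z : Fin (n + 1) → ℝ) :
    mink x (c • z) = c * mink x z := by
  rw [mink_comm, mink_smul_left, mink_comm z]

/-- The Minkowski form as a bilinear map; this makes the library's lemmas on linear maps available
for `mink`. -/
def minkBilin (n : ℕ) : (Fin (n + 1) → ℝ) →ₗ[ℝ] (Fin (n + 1) → ℝ) →ₗ[ℝ] ℝ :=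
  LinearMap.mk₂ ℝ mink mink_add_left mink_smul_left mink_add_right mink_smul_right

@[simp] lemma minkBilin_apply (x y : Fin (n + 1) → ℝ) : minkBilin n x y = mink x y := rfl

@[simp] lemma mink_zero_right (x : Fin (n + 1) → ℝ) : mink x 0 = 0 := (minkBilin n x).map_zero

@[simp] lemma mink_zero_left (x : Fin (n + 1) → ℝ) : mink 0 x = 0 := (minkBilin n).map_zero₂ x

@[simp] lemma mink_neg_right (x y : Fin (n + 1) → ℝ) : mink x (-y) = -mink x y :=
  (minkBilin n x).map_neg y

@[simp] lemma mink_neg_left (x y : Fin (n + 1) → ℝ) : mink (-x) y = -mink x y :=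
  (minkBilin n).map_neg₂ x y

@[simp] lemma mink_sub_right (x y z : Fin (n + 1) → ℝ) :
    mink x (y - z) = mink x y - mink x z := (minkBilin n x).map_sub y z

@[simp] lemma mink_sub_left (x y z : Fin (n + 1) → ℝ) :
    mink (x - y) z = mink x z - mink y z := (minkBilin n).map_sub₂ x y z

@[simp] lemma mink_sum_right {ι : Type*} (s : Finset ι) (x : Fin (n + 1) → ℝ)
    (f : ι → Fin (n + 1) → ℝ) : mink x (∑ i ∈ s, f i) = ∑ i ∈ s, mink x (f i) :=
  map_sum (minkBilin n x) f s

@[simp] lemma mink_sum_left {ι : Type*} (s : Finset ι) (x : Fin (n + 1) → ℝ)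
    (f : ι → Fin (n + 1) → ℝ) : mink (∑ i ∈ s, f i) x = ∑ i ∈ s, mink (f i) x :=
  (minkBilin n).map_sum₂ s f x

lemma mink_self_eq (x : Fin (n + 1) → ℝ) :
    mink x x = -(x 0) ^ 2 + ∑ i : Fin n, x i.succ ^ 2 := by
  simp only [mink, sq]

lemma mink_self_nonneg_of_time_eq_zero {w : Fin (n + 1) → ℝ} (hw : w 0 = 0) : 0 ≤ mink w w := by
  rw [mink_self_eq, hw]
  simpa using Finset.sum_nonneg fun i _ => sq_nonneg (w (Fin.succ i))

lemma eq_zero_of_mink_self_nonpos_of_time_eq_zero {w : Fin (n + 1) → ℝ} (h : mink w w ≤ 0)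
    (hw : w 0 = 0) : w = 0 := by
  rw [mink_self_eq, hw] at h
  have hsum : ∑ i : Fin n, w i.succ ^ 2 = 0 :=
    le_antisymm (by simpa using h) (Finset.sum_nonneg fun i _ => sq_nonneg _)
  rw [Finset.sum_eq_zero_iff_of_nonneg fun i _ => sq_nonneg _] at hsum
  funext i
  refine Fin.cases hw (fun j => ?_) i
  simpa using hsum j (Finset.mem_univ _)

lemma time_ne_zero_of_causal {x : Fin (n + 1) → ℝ} (hx : mink x x ≤ 0) (h0 : x ≠ 0) :
    x 0 ≠ 0 := fun h => h0 (eq_zero_of_mink_self_nonpos_of_time_eq_zero hx h)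

lemma mink_self_eq_sub_of_orth {x y : Fin (n + 1) → ℝ} (h : mink x y = 0) (s : ℝ) :
    mink y y = mink (y - s • x) (y - s • x) - s ^ 2 * mink x x := by
  simp only [mink_sub_left, mink_sub_right, mink_smul_left, mink_smul_right, mink_comm y x, h]
  ring

lemma mink_self_nonneg_of_orth_causal {x y : Fin (n + 1) → ℝ} (hx : mink x x ≤ 0) (hx0 : x ≠ 0)
    (h : mink x y = 0) : 0 ≤ mink y y := by
  have ht := time_ne_zero_of_causal hx hx0
  rw [mink_self_eq_sub_of_orth h (y 0 / x 0)]
  have := mink_self_nonneg_of_time_eq_zero (w := y - (y 0 / x 0) • x) (by simp [ht])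
  nlinarith [mul_nonneg (sq_nonneg (y 0 / x 0)) (neg_nonneg.2 hx)]

lemma exists_eq_smul_of_orth_causal {x y : Fin (n + 1) → ℝ} (hx : mink x x ≤ 0) (hx0 : x ≠ 0)
    (hy : mink y y ≤ 0) (h : mink x y = 0) : ∃ s : ℝ, y = s • x := by
  have ht := time_ne_zero_of_causal hx hx0
  refine ⟨y 0 / x 0, sub_eq_zero.1 (eq_zero_of_mink_self_nonpos_of_time_eq_zero ?_ (by simp [ht]))⟩
  rw [mink_self_eq_sub_of_orth h (y 0 / x 0)] at hy
  nlinarith [mul_nonneg (sq_nonneg (y 0 / x 0)) (neg_nonneg.2 hx)]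

lemma ne_zero_of_timelike {x : Fin (n + 1) → ℝ} (hx : mink x x < 0) : x ≠ 0 := by
  rintro rfl
  simp at hx

lemma eq_zero_of_orth_timelike {x y : Fin (n + 1) → ℝ} (hx : mink x x < 0)
    (hy : mink y y ≤ 0) (h : mink x y = 0) : y = 0 := by
  obtain ⟨s, rfl⟩ := exists_eq_smul_of_orth_causal hx.le (ne_zero_of_timelike hx) hy h
  rw [mink_smul_right] at h
  rw [(mul_eq_zero.1 h).resolve_right hx.ne, zero_smul]

/-- The closed future light cone, whose interior rays are the points of hyperbolic space and whose
boundary rays are the ideal points. -/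
def futureCone (n : ℕ) : Set (Fin (n + 1) → ℝ) :=
  {x | mink x x ≤ 0 ∧ 0 ≤ x 0}

lemma time_pos_of_mem_futureCone {x : Fin (n + 1) → ℝ} (hx : x ∈ futureCone n) (h0 : x ≠ 0) :
    0 < x 0 :=
  lt_of_le_of_ne hx.2 (time_ne_zero_of_causal hx.1 h0).symm

lemma mink_nonpos_of_mem_futureCone {x y : Fin (n + 1) → ℝ} (hx : x ∈ futureCone n)
    (hy : y ∈ futureCone n) : mink x y ≤ 0 := by
  obtain ⟨hxx, hx0⟩ := hx
  obtain ⟨hyy, hy0⟩ := hy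
  rw [mink_self_eq] at hxx hyy
  have hsq : (∑ i : Fin n, x i.succ * y i.succ) ^ 2 ≤ (x 0 * y 0) ^ 2 :=
    calc (∑ i : Fin n, x i.succ * y i.succ) ^ 2
        ≤ (∑ i : Fin n, x i.succ ^ 2) * ∑ i : Fin n, y i.succ ^ 2 :=
          Finset.sum_mul_sq_le_sq_mul_sq _ _ _
      _ ≤ x 0 ^ 2 * y 0 ^ 2 :=
          mul_le_mul (by linarith) (by linarith) (Finset.sum_nonneg fun i _ => sq_nonneg _)
            (sq_nonneg _)
      _ = (x 0 * y 0) ^ 2 := (mul_pow _ _ _).symm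
  have habs := abs_le_of_sq_le_sq hsq (mul_nonneg hx0 hy0)
  rw [mink]
  linarith [(abs_le.1 habs).2]

lemma mink_neg_of_timelike {x y : Fin (n + 1) → ℝ} (hx : x ∈ futureCone n) (hxx : mink x x < 0)
    (hy : y ∈ futureCone n) (hy0 : y ≠ 0) : mink x y < 0 :=
  lt_of_le_of_ne (mink_nonpos_of_mem_futureCone hx hy) fun h =>
    hy0 (eq_zero_of_orth_timelike hxx hy.1 h)

lemma mem_futureCone_of_mink_neg {x p : Fin (n + 1) → ℝ} (hx : mink x x ≤ 0)
    (hp : p ∈ futureCone n) (h : mink x p < 0) : x ∈ futureCone n := by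
  refine ⟨hx, ?_⟩
  by_contra! hx0
  have hneg : -x ∈ futureCone n := ⟨by simpa using hx, by simpa using hx0.le⟩
  have := mink_nonpos_of_mem_futureCone hneg hp
  rw [mink_neg_left] at this
  linarith

end Minkowski

/-! ### Right-angled systems of normals -/

section PolyhedralCone

variable {n : ℕ} {ι : Type*} {e : ι → Fin (n + 1) → ℝ}

/-- The convex cone cut out by the half-spaces with outward normals `e i`. -/
def polyhedralCone (e : ι → Fin (n + 1) → ℝ) : Set (Fin (n + 1) → ℝ) :=
  {x | ∀ i, mink (e i) x ≤ 0}

lemma exists_pos_forall_add_mul_nonpos (s : Finset ι) (f g : ι → ℝ)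
    (hf : ∀ i ∈ s, f i ≤ 0) (hg : ∀ i ∈ s, f i = 0 → g i ≤ 0) :
    ∃ ε : ℝ, 0 < ε ∧ ∀ i ∈ s, f i + ε * g i ≤ 0 := by
  have hev : ∀ᶠ ε in nhdsWithin (0 : ℝ) (Set.Ioi 0), ∀ i ∈ s, f i + ε * g i ≤ 0 := by
    rw [Filter.eventually_all_finset]
    intro i hi
    rcases (hf i hi).lt_or_eq with h | h
    · have htendsto : Filter.Tendsto (fun ε : ℝ => f i + ε * g i) (nhdsWithin 0 (Set.Ioi 0))
          (nhds (f i + 0 * g i)) :=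
        (Continuous.tendsto (by fun_prop) 0).mono_left nhdsWithin_le_nhds
      filter_upwards [htendsto.eventually_lt_const (by simpa using h)] with ε hε using hε.le
    · filter_upwards [self_mem_nhdsWithin] with ε hε
      rw [h, zero_add]
      exact mul_nonpos_of_nonneg_of_nonpos (le_of_lt hε) (hg i hi h)
  obtain ⟨ε, hle, hpos⟩ := (hev.and self_mem_nhdsWithin).exists
  exact ⟨ε, hpos, hle⟩

lemma exists_exit [Finite ι] {x z : Fin (n + 1) → ℝ} (hx : x ∈ polyhedralCone e)
    (hz : z ∉ polyhedralCone e) :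
    ∃ t : ℝ, x + t • z ∈ polyhedralCone e ∧
      ∃ i, 0 < mink (e i) z ∧ mink (e i) (x + t • z) = 0 := by
  classical
  cases nonempty_fintype ι
  obtain ⟨i₀, hi₀⟩ : ∃ i, 0 < mink (e i) z := by simpa [polyhedralCone] using hz
  obtain ⟨i, hi, hmin⟩ := Finset.exists_min_image
    (Finset.univ.filter fun i => 0 < mink (e i) z) (fun i => -mink (e i) x / mink (e i) z)
    ⟨i₀, by simpa using hi₀⟩
  simp only [Finset.mem_filter, Finset.mem_univ, true_and] at hi hmin
  have ht : 0 ≤ -mink (e i) x / mink (e i) z := div_nonneg (by linarith [hx i]) hi.le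
  refine ⟨-mink (e i) x / mink (e i) z, fun j => ?_, i, hi, ?_⟩
  · rw [mink_add_right, mink_smul_right]
    rcases lt_or_ge 0 (mink (e j) z) with hj | hj
    · have := mul_le_mul_of_nonneg_right (hmin j hj) hj.le
      rw [div_mul_cancel₀ _ hj.ne'] at this
      linarith
    · linarith [hx j, mul_nonpos_of_nonneg_of_nonpos ht hj]
  · rw [mink_add_right, mink_smul_right, div_mul_cancel₀ _ hi.ne', add_neg_cancel]

end PolyhedralCone

/-- The unit outward normals `e i` of the facets of a right-angled polyhedron of finite volume with
interior point `y`. Facets that do not meet at a right angle are parallel or ultraparallel, and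
finite volume is encoded by the cone over the polyhedron lying in the closed future light cone. -/
structure RightAngledSystem {n : ℕ} {ι : Type*} (e : ι → Fin (n + 1) → ℝ)
    (y : Fin (n + 1) → ℝ) : Prop where
  unit : ∀ i, mink (e i) (e i) = 1
  gram : ∀ i j, i ≠ j → mink (e i) (e j) = 0 ∨ mink (e i) (e j) ≤ -1
  neg : ∀ i, mink (e i) y < 0
  timelike : mink y y < 0
  cone_subset : polyhedralCone e ⊆ futureCone n

/-- The orthogonal projection of `y` to the common orthogonal complement of the pairwise orthogonal
unit vectors `e i`, `i ∈ T`: an interior point of the face on the facets in `T`. -/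
def facePoint {n : ℕ} {ι : Type*} (e : ι → Fin (n + 1) → ℝ) (y : Fin (n + 1) → ℝ)
    (T : Finset ι) : Fin (n + 1) → ℝ :=
  y - ∑ i ∈ T, mink (e i) y • e i

namespace RightAngledSystem

variable {n : ℕ} {ι : Type*} {e : ι → Fin (n + 1) → ℝ} {y p x z : Fin (n + 1) → ℝ} {i j k : ι}

lemma interior_mem_futureCone (h : RightAngledSystem e y) : y ∈ futureCone n :=
  h.cone_subset fun i => (h.neg i).le

lemma gram_nonpos (h : RightAngledSystem e y) (hij : i ≠ j) : mink (e i) (e j) ≤ 0 := by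
  rcases h.gram i j hij with h | h <;> linarith

lemma ne_of_gram_ne_one (h : RightAngledSystem e y) (hij : mink (e i) (e j) ≠ 1) : i ≠ j := by
  rintro rfl
  exact hij (h.unit i)

lemma mink_facePoint_of_mem (h : RightAngledSystem e y) {T : Finset ι}
    (hT : (T : Set ι).Pairwise fun i j => mink (e i) (e j) = 0) (hi : i ∈ T) :
    mink (e i) (facePoint e y T) = 0 := by
  rw [facePoint, mink_sub_right, mink_sum_right, Finset.sum_eq_single_of_mem i hi,
    mink_smul_right, h.unit, mul_one, sub_self]
  intro j hj hji
  rw [mink_smul_right, hT hi hj hji.symm, mul_zero]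

lemma mink_facePoint_neg_of_notMem (h : RightAngledSystem e y) {T : Finset ι} (hi : i ∉ T) :
    mink (e i) (facePoint e y T) < 0 := by
  rw [facePoint, mink_sub_right, mink_sum_right]
  have : 0 ≤ ∑ j ∈ T, mink (e i) (mink (e j) y • e j) := by
    refine Finset.sum_nonneg fun j hj => ?_
    rw [mink_smul_right]
    exact mul_nonneg_of_nonpos_of_nonpos (h.neg j).le
      (h.gram_nonpos (ne_of_mem_of_not_mem hj hi).symm)
  linarith [h.neg i]

lemma facePoint_timelike (h : RightAngledSystem e y) {T : Finset ι}
    (hT : (T : Set ι).Pairwise fun i j => mink (e i) (e j) = 0) :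
    mink (facePoint e y T) (facePoint e y T) < 0 := by
  have hproj : mink (facePoint e y T) (facePoint e y T) = mink (facePoint e y T) y := by
    nth_rw 2 [facePoint]
    rw [mink_sub_right, mink_sum_right, Finset.sum_eq_zero, sub_zero]
    intro i hi
    rw [mink_smul_right, mink_comm (facePoint e y T), h.mink_facePoint_of_mem hT hi, mul_zero]
  rw [hproj, facePoint, mink_sub_left, mink_sum_left]
  have : 0 ≤ ∑ j ∈ T, mink (mink (e j) y • e j) y :=
    Finset.sum_nonneg fun j _ => by
      rw [mink_smul_left]
      exact mul_self_nonneg _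
  linarith [h.timelike]

lemma facePoint_mem_polyhedralCone (h : RightAngledSystem e y) {T : Finset ι}
    (hT : (T : Set ι).Pairwise fun i j => mink (e i) (e j) = 0) :
    facePoint e y T ∈ polyhedralCone e := fun i => by
  by_cases hi : i ∈ T
  · exact (h.mink_facePoint_of_mem hT hi).le
  · exact (h.mink_facePoint_neg_of_notMem hi).le

lemma add_ne_zero (h : RightAngledSystem e y) (i j : ι) : e i + e j ≠ 0 := by
  intro h0
  have : mink (e i + e j) y = 0 := by rw [h0, mink_zero_left]
  rw [mink_add_left] at this
  linarith [h.neg i, h.neg j]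

lemma mink_add_self (h : RightAngledSystem e y) (i j : ι) :
    mink (e i + e j) (e i + e j) = 2 + 2 * mink (e i) (e j) := by
  simp only [mink_add_left, mink_add_right, h.unit, mink_comm (e j) (e i)]
  ring

lemma gram_eq_zero_of_timelike (h : RightAngledSystem e y) (hx : mink x x < 0) (hij : i ≠ j)
    (hi : mink (e i) x = 0) (hj : mink (e j) x = 0) : mink (e i) (e j) = 0 := by
  refine (h.gram i j hij).resolve_right fun hc => h.add_ne_zero i j ?_
  refine eq_zero_of_orth_timelike hx ?_ ?_
  · rw [h.mink_add_self]
    linarith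
  · rw [mink_comm, mink_add_left, hi, hj, add_zero]

/-- An ideal point of a polyhedron of finite volume is isolated among the ideal points. -/
lemma mink_self_nonpos_of_tangent [Finite ι] (h : RightAngledSystem e y)
    (hp : p ∈ polyhedralCone e) (hpp : mink p p = 0) (hpz : mink p z = 0)
    (hz : ∀ i, mink (e i) p = 0 → mink (e i) z ≤ 0) : mink z z ≤ 0 := by
  cases nonempty_fintype ι
  obtain ⟨ε, hε, hle⟩ := exists_pos_forall_add_mul_nonpos Finset.univ (fun i => mink (e i) p)
    (fun i => mink (e i) z) (fun i _ => hp i) fun i _ => hz i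
  have hcausal : mink (p + ε • z) (p + ε • z) ≤ 0 :=
    (h.cone_subset fun i => by simpa using hle i (Finset.mem_univ i)).1
  simp only [mink_add_left, mink_add_right, mink_smul_left, mink_smul_right, hpp, hpz,
    mink_comm z p] at hcausal
  by_contra! hc
  linarith [mul_pos hε (mul_pos hε hc)]

lemma exists_add_eq_smul_of_not_orth (h : RightAngledSystem e y) (hp : p ∈ futureCone n)
    (hp0 : p ≠ 0) (hij : i ≠ j) (hi : mink (e i) p = 0) (hj : mink (e j) p = 0)
    (hne : mink (e i) (e j) ≠ 0) : ∃ c : ℝ, 0 < c ∧ e i + e j = c • p := by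
  have hcausal : mink (e i + e j) (e i + e j) ≤ 0 := by
    rw [h.mink_add_self]
    linarith [(h.gram i j hij).resolve_left hne]
  obtain ⟨c, hc⟩ := exists_eq_smul_of_orth_causal hp.1 hp0 hcausal
    (by rw [mink_comm, mink_add_left, hi, hj, add_zero])
  refine ⟨c, ?_, hc⟩
  have hyneg : c * mink p y < 0 := by
    rw [← mink_smul_left, ← hc, mink_add_left]
    linarith [h.neg i, h.neg j]
  have hpy := mink_neg_of_timelike h.interior_mem_futureCone h.timelike hp hp0
  rw [mink_comm] at hpy
  exact pos_of_mul_neg_left hyneg hpy.le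

lemma exists_opposite [Finite ι] (h : RightAngledSystem e y) (hp : p ∈ polyhedralCone e)
    (hpp : mink p p = 0) (hp0 : p ≠ 0) (hi : mink (e i) p = 0) :
    ∃ j, mink (e j) p = 0 ∧ ∃ c : ℝ, 0 < c ∧ e i + e j = c • p := by
  by_contra! hc
  have hcausal : mink (-e i) (-e i) ≤ 0 :=
    h.mink_self_nonpos_of_tangent hp hpp (by rw [mink_neg_right, mink_comm, hi, neg_zero])
      fun j hj => by
        by_contra! hlt
        rw [mink_neg_right, mink_comm] at hlt
        obtain ⟨c, hcpos, hsum⟩ := h.exists_add_eq_smul_of_not_orth (h.cone_subset hp) hp0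
          (h.ne_of_gram_ne_one (by linarith)) hi hj (by linarith)
        exact hc j hj c hcpos hsum
  rw [mink_neg_left, mink_neg_right, neg_neg, h.unit] at hcausal
  linarith

lemma gram_eq_neg_one_of_add_eq_smul (h : RightAngledSystem e y) (hi : mink (e i) p = 0) {c : ℝ}
    (hsum : e i + e j = c • p) : mink (e i) (e j) = -1 := by
  rw [eq_sub_of_add_eq' hsum, mink_sub_right, mink_smul_right, hi, h.unit]
  ring

lemma eq_of_add_eq_smul (h : RightAngledSystem e y) (hpp : mink p p = 0) (hi : mink (e i) p = 0)
    {c c' : ℝ} (hj : e i + e j = c • p) (hk : e i + e k = c' • p) : j = k := by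
  by_contra hjk
  have := h.gram_nonpos hjk
  rw [eq_sub_of_add_eq' hj, eq_sub_of_add_eq' hk] at this
  simp only [mink_sub_left, mink_sub_right, mink_smul_left, mink_smul_right, hpp, hi, mink_comm p,
    h.unit] at this
  linarith

/-- The component of `e j` orthogonal to `e i` lies in the future cone, so it pairs non-positively
with every point of the hyperplane of `e i`. -/
lemma sub_gram_smul_mem_futureCone (h : RightAngledSystem e y)
    (hij : mink (e i) (e j) ≤ -1) : e j - mink (e i) (e j) • e i ∈ futureCone n := by
  refine mem_futureCone_of_mink_neg ?_ h.interior_mem_futureCone ?_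
  · simp only [mink_sub_left, mink_sub_right, mink_smul_left, mink_smul_right, h.unit,
      mink_comm (e j) (e i)]
    nlinarith
  · rw [mink_sub_left, mink_smul_left]
    nlinarith [h.neg i, h.neg j]

lemma mink_nonpos_of_mink_eq_zero (h : RightAngledSystem e y) (hij : mink (e i) (e j) ≤ -1)
    (hx : x ∈ futureCone n) (hi : mink (e i) x = 0) : mink (e j) x ≤ 0 := by
  have := mink_nonpos_of_mem_futureCone (h.sub_gram_smul_mem_futureCone hij) hx
  rwa [mink_sub_left, mink_smul_left, hi, mul_zero, sub_zero] at this

lemma mink_eq_zero_of_tangent (h : RightAngledSystem e y) (hij : mink (e i) (e j) ≤ -1)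
    (hx : x ∈ futureCone n) (hx0 : x ≠ 0) (hi : mink (e i) x = 0) (hj : mink (e j) x = 0)
    (hxz : mink x z = 0) (hiz : mink (e i) z = 0) : mink (e j) z = 0 := by
  obtain ⟨s, hs⟩ := exists_eq_smul_of_orth_causal hx.1 hx0
    (h.sub_gram_smul_mem_futureCone hij).1 (by
      rw [mink_comm, mink_sub_left, mink_smul_left, hi, hj, mul_zero, sub_zero])
  rw [sub_eq_iff_eq_add.1 hs, mink_add_left, mink_smul_left, mink_smul_left, hxz, hiz]
  ring

end RightAngledSystem


/-! ### Combinatorics at an ideal vertex -/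

/-- The normals vanishing at the ideal vertex `p` form a cube: they come in pairs `a l true`,
`a l false` of facets parallel at `p`, indexed by `κ`, and facets of distinct pairs are
orthogonal. -/
structure Cusp {n : ℕ} {ι κ : Type*} (e : ι → Fin (n + 1) → ℝ) (p : Fin (n + 1) → ℝ)
    (a : κ → Bool → ι) (c : κ → ℝ) : Prop where
  mem : p ∈ polyhedralCone e
  null : mink p p = 0
  ne_zero : p ≠ 0
  orth : ∀ l b, mink (e (a l b)) p = 0
  cross : ∀ l m, l ≠ m → ∀ b b', mink (e (a l b)) (e (a m b')) = 0
  sum_eq : ∀ l b, e (a l b) + e (a l !b) = c l • p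
  pos : ∀ l, 0 < c l
  exhaust : ∀ i, mink (e i) p = 0 → ∃ l b, i = a l b

section FarNormals

variable {n : ℕ} {ι κ : Type*} [Fintype ι]

open scoped Classical in
/-- The facets not passing through `p` that are orthogonal to the facets `a l (σ l)`, `l ∈ D`:
the facets, away from `p`, of the face cut out by those `a l (σ l)`. -/
def farNormals (e : ι → Fin (n + 1) → ℝ) (p : Fin (n + 1) → ℝ) (a : κ → Bool → ι) (D : Finset κ)
    (σ : κ → Bool) : Finset ι :=
  Finset.univ.filter fun i => mink (e i) p ≠ 0 ∧ ∀ l ∈ D, mink (e i) (e (a l (σ l))) = 0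

variable {e : ι → Fin (n + 1) → ℝ} {p : Fin (n + 1) → ℝ} {a : κ → Bool → ι} {D D' : Finset κ}
  {σ τ : κ → Bool} {i : ι}

lemma mem_farNormals :
    i ∈ farNormals e p a D σ ↔
      mink (e i) p ≠ 0 ∧ ∀ l ∈ D, mink (e i) (e (a l (σ l))) = 0 := by
  simp [farNormals]

lemma farNormals_congr (h : ∀ l ∈ D, σ l = τ l) :
    farNormals e p a D σ = farNormals e p a D τ := by
  ext i
  simp only [mem_farNormals]
  exact and_congr_right fun _ => forall₂_congr fun l hl => by rw [h l hl]

lemma farNormals_anti (h : D ⊆ D') : farNormals e p a D' σ ⊆ farNormals e p a D σ := fun i hi => by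
  rw [mem_farNormals] at hi ⊢
  exact ⟨hi.1, fun l hl => hi.2 l (h hl)⟩

lemma mem_farNormals_of_mem_insert_update [DecidableEq κ] {l : κ} (hl : l ∉ D) {b : Bool}
    (hi : i ∈ farNormals e p a (insert l D) (Function.update σ l b)) :
    i ∈ farNormals e p a D σ ∧ mink (e i) (e (a l b)) = 0 := by
  refine ⟨?_, by simpa using (mem_farNormals.1 hi).2 l (Finset.mem_insert_self _ _)⟩
  rw [farNormals_congr (τ := Function.update σ l b) fun m hm =>
    (Function.update_of_ne (ne_of_mem_of_not_mem hm hl) _ _).symm]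
  exact farNormals_anti (Finset.subset_insert l D) hi

end FarNormals

lemma card_compl_insert {κ : Type*} [Fintype κ] [DecidableEq κ] {D : Finset κ} {l : κ} {d : ℕ}
    (hl : l ∉ D) (hD : Dᶜ.card = d + 1) : (insert l D)ᶜ.card = d := by
  rw [Finset.compl_insert, Finset.card_erase_of_mem (Finset.mem_compl.2 hl), hD,
    add_tsub_cancel_right]

namespace RightAngledSystem

variable {n : ℕ} {ι : Type*} [Finite ι] {e : ι → Fin (n + 1) → ℝ} {y p : Fin (n + 1) → ℝ}

lemma exists_maximal_orthogonal_finset (e : ι → Fin (n + 1) → ℝ) (p : Fin (n + 1) → ℝ) :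
    ∃ R : Finset ι, (∀ l ∈ R, mink (e l) p = 0) ∧
      (R : Set ι).Pairwise (fun i j => mink (e i) (e j) = 0) ∧
      ∀ i ∉ R, mink (e i) p = 0 → ∃ l ∈ R, mink (e l) (e i) ≠ 0 := by
  classical
  obtain ⟨R, ⟨hRp, hR⟩, hmax⟩ := Set.Finite.exists_maximal
    (s := {T : Finset ι | (∀ l ∈ T, mink (e l) p = 0) ∧
      (T : Set ι).Pairwise fun i j => mink (e i) (e j) = 0}) (Set.toFinite _) ⟨∅, by simp⟩
  refine ⟨R, hRp, hR, fun i hiR hi => ?_⟩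
  by_contra! hort
  refine hiR (hmax (y := insert i R) ⟨?_, ?_⟩ (Finset.subset_insert i R)
    (Finset.mem_insert_self i R))
  · simpa [hi] using hRp
  · rw [Finset.coe_insert,
      @Set.pairwise_insert_of_symm _ _ _ _ ⟨fun j k hjk => (mink_comm (e k) (e j)).trans hjk⟩]
    exact ⟨hR, fun l hl _ => (mink_comm (e i) (e l)).trans (hort l hl)⟩

lemma exists_cusp (h : RightAngledSystem e y) (hp : p ∈ polyhedralCone e) (hpp : mink p p = 0)
    (hp0 : p ≠ 0) : ∃ (R : Finset ι) (a : R → Bool → ι) (c : R → ℝ), Cusp e p a c := by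
  obtain ⟨R, hRp, hR, hmax⟩ := exists_maximal_orthogonal_finset e p
  choose o hop c hc hsum using fun l : R => h.exists_opposite hp hpp hp0 (hRp l l.2)
  have ho : ∀ l, e (o l) = c l • p - e l := fun l => eq_sub_of_add_eq' (hsum l)
  refine ⟨R, fun l b => bif b then l else o l, c, hp, hpp, hp0, ?_, ?_, ?_, hc, ?_⟩
  · rintro l (_ | _)
    exacts [hop l, hRp l l.2]
  · intro l m hlm
    have hlm0 : mink (e l) (e m) = 0 := hR l.2 m.2 (Subtype.coe_ne_coe.2 hlm)
    have hl := hRp l l.2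
    have hm := hRp m m.2
    rintro (_ | _) (_ | _) <;>
      simp [ho, hlm0, hpp, hl, hm, mink_comm p]
  · rintro l (_ | _)
    · simpa [add_comm] using hsum l
    · simpa using hsum l
  · intro i hi
    by_cases hiR : i ∈ R
    · exact ⟨⟨i, hiR⟩, true, rfl⟩
    obtain ⟨l, hl, hli⟩ := hmax i hiR hi
    obtain ⟨d, -, hd⟩ := h.exists_add_eq_smul_of_not_orth (h.cone_subset hp) hp0
      (ne_of_mem_of_not_mem hl hiR) (hRp l hl) hi hli
    exact ⟨⟨l, hl⟩, false, h.eq_of_add_eq_smul hpp (hRp l hl) hd (hsum ⟨l, hl⟩)⟩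

end RightAngledSystem

namespace Cusp

variable {n : ℕ} {ι κ : Type*} {e : ι → Fin (n + 1) → ℝ} {y p : Fin (n + 1) → ℝ}
  {a : κ → Bool → ι} {c : κ → ℝ} {i : ι} {l : κ} {b : Bool}

lemma orth' (C : Cusp e p a c) (l : κ) (b : Bool) : mink p (e (a l b)) = 0 :=
  (mink_comm _ _).trans (C.orth l b)

lemma mink_add (C : Cusp e p a c) (l : κ) (b : Bool) (x : Fin (n + 1) → ℝ) :
    mink x (e (a l b)) + mink x (e (a l !b)) = c l * mink x p := by
  rw [← mink_add_right, C.sum_eq, mink_smul_right]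

lemma opp (C : Cusp e p a c) (h : RightAngledSystem e y) (l : κ) (b : Bool) :
    mink (e (a l b)) (e (a l !b)) = -1 :=
  h.gram_eq_neg_one_of_add_eq_smul (C.orth l b) (C.sum_eq l b)

lemma not_orth_both (C : Cusp e p a c) (hi : mink (e i) p ≠ 0)
    (hb : mink (e i) (e (a l b)) = 0) (hb' : mink (e i) (e (a l !b)) = 0) : False := by
  have := C.mink_add l b (e i)
  rw [hb, hb', add_zero] at this
  exact mul_ne_zero (C.pos l).ne' hi this.symm

lemma injective_uncurry (C : Cusp e p a c) (h : RightAngledSystem e y) :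
    Function.Injective (Function.uncurry a) := by
  rintro ⟨l, b⟩ ⟨m, b'⟩ heq
  rw [Function.uncurry_apply_pair, Function.uncurry_apply_pair] at heq
  have hunit : mink (e (a l b)) (e (a m b')) = 1 := by rw [heq, h.unit]
  by_cases hlm : l = m
  · subst hlm
    by_contra hne
    have hb : b' = !b := Bool.eq_not.2 fun hb => hne (hb ▸ rfl)
    rw [hb, C.opp h] at hunit
    norm_num at hunit
  · rw [C.cross l m hlm] at hunit
    norm_num at hunit

lemma pairwise_orth_image [DecidableEq ι] (C : Cusp e p a c) (s : Finset κ) (σ : κ → Bool) :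
    ((s.image fun l => a l (σ l) : Finset ι) : Set ι).Pairwise
      fun i j => mink (e i) (e j) = 0 := by
  intro i hi j hj hij
  simp only [Finset.coe_image, Set.mem_image] at hi hj
  obtain ⟨l, -, rfl⟩ := hi
  obtain ⟨m, -, rfl⟩ := hj
  exact C.cross l m (fun hlm => hij (hlm ▸ rfl)) _ _

/-- The link of an ideal vertex of an `n`-dimensional polyhedron is an `(n - 1)`-cube. -/
lemma le_card_add_one [Finite ι] [Fintype κ] (C : Cusp e p a c) (h : RightAngledSystem e y) :
    n ≤ Fintype.card κ + 1 := by
  let F : (Fin (n + 1) → ℝ) →ₗ[ℝ] (ℝ × ℝ) × (κ → ℝ) :=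
    ((LinearMap.proj 0).prod (minkBilin n p)).prod
      (LinearMap.pi fun l => minkBilin n (e (a l true)))
  have hF : Function.Injective F := by
    rw [← LinearMap.ker_eq_bot, LinearMap.ker_eq_bot']
    intro z hz
    have hz0 : z 0 = 0 := congrArg (fun w => w.1.1) hz
    have hpz : mink p z = 0 := congrArg (fun w => w.1.2) hz
    have htrue : ∀ l, mink (e (a l true)) z = 0 := fun l => congrArg (fun w => w.2 l) hz
    have hfalse : ∀ l, mink (e (a l false)) z = 0 := fun l => by
      have := C.mink_add l true z
      rwa [mink_comm z, htrue, mink_comm z p, hpz, mul_zero, zero_add, mink_comm] at this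
    refine eq_zero_of_mink_self_nonpos_of_time_eq_zero
      (h.mink_self_nonpos_of_tangent C.mem C.null hpz fun i hi => ?_) hz0
    obtain ⟨l, _ | _, rfl⟩ := C.exhaust i hi
    exacts [(hfalse l).le, (htrue l).le]
  have := LinearMap.finrank_le_finrank_of_injective hF
  simp only [Module.finrank_prod, Module.finrank_self, Module.finrank_fintype_fun_eq_card,
    Fintype.card_fin] at this
  omega

/-- The far end `q` of the edge that leaves `p` along the facets `a l (σ l)`. -/
lemma exists_edge_end [Finite ι] [Finite κ] (C : Cusp e p a c) (h : RightAngledSystem e y)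
    (σ : κ → Bool) :
    ∃ q ∈ polyhedralCone e, (∀ l, mink (e (a l (σ l))) q = 0) ∧ mink q p < 0 ∧
      ∃ i, mink (e i) p ≠ 0 ∧ mink (e i) q = 0 := by
  classical
  cases nonempty_fintype κ
  have hT := C.pairwise_orth_image Finset.univ σ
  have hx := h.facePoint_mem_polyhedralCone hT
  have hpc := h.cone_subset C.mem
  have hneg : -p ∉ polyhedralCone e := fun hm => by
    have := (h.cone_subset hm).2
    rw [Pi.neg_apply] at this
    linarith [time_pos_of_mem_futureCone hpc C.ne_zero]
  obtain ⟨t, hq, i, hi, hiq⟩ := exists_exit hx hneg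
  refine ⟨_, hq, fun l => ?_, ?_, i, fun hip => ?_, hiq⟩
  · rw [mink_add_right, h.mink_facePoint_of_mem hT (Finset.mem_image_of_mem _ (Finset.mem_univ l)),
      mink_smul_right, mink_neg_right, C.orth]
    ring
  · rw [mink_add_left, mink_smul_left, mink_neg_left, C.null, neg_zero, mul_zero, add_zero]
    exact mink_neg_of_timelike (h.cone_subset hx) (h.facePoint_timelike hT) hpc C.ne_zero
  · rw [mink_neg_right, hip, neg_zero] at hi
    exact hi.false

section Links

variable [Fintype ι] {D : Finset κ} {σ : κ → Bool}

lemma card_split [DecidableEq κ] (C : Cusp e p a c) (hl : l ∉ D) (σ : κ → Bool)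
    {A : Finset ι} (hA : A ⊆ farNormals e p a D σ)
    (hAl : ∀ i ∈ A, ∀ b, mink (e i) (e (a l b)) ≠ 0) :
    (farNormals e p a (insert l D) (Function.update σ l true)).card +
      (farNormals e p a (insert l D) (Function.update σ l false)).card + A.card ≤
        (farNormals e p a D σ).card := by
  classical
  have hmem : ∀ b, ∀ i ∈ farNormals e p a (insert l D) (Function.update σ l b),
      i ∈ farNormals e p a D σ ∧ mink (e i) (e (a l b)) = 0 :=
    fun b i hi => mem_farNormals_of_mem_insert_update hl hi
  rw [← Finset.card_union_of_disjoint, ← Finset.card_union_of_disjoint]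
  · exact Finset.card_le_card <| Finset.union_subset
      (Finset.union_subset (fun i hi => (hmem _ i hi).1) fun i hi => (hmem _ i hi).1) hA
  · rw [Finset.disjoint_left]
    intro i hi hiA
    rcases Finset.mem_union.1 hi with hi | hi
    · exact hAl i hiA _ (hmem _ i hi).2
    · exact hAl i hiA _ (hmem _ i hi).2
  · rw [Finset.disjoint_left]
    intro i hi hi'
    exact C.not_orth_both (mem_farNormals.1 hi).1 (b := true) (hmem _ i hi).2 (hmem _ i hi').2

/-- The far end of an edge leaving `p` is either a finite vertex, or an ideal vertex, at which each
facet has an opposite one. -/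
lemma corner [Fintype κ] [DecidableEq κ] (C : Cusp e p a c) (h : RightAngledSystem e y)
    (σ : κ → Bool) :
    (farNormals e p a Finset.univ σ).Nonempty ∨
      ∀ l, ∃ i ∈ farNormals e p a {l}ᶜ σ, mink (e i) (e (a l (σ l))) = -1 := by
  obtain ⟨q, hq, hqσ, hqp, i, hip, hiq⟩ := C.exists_edge_end h σ
  rcases (h.cone_subset hq).1.lt_or_eq with hqq | hqq
  · refine Or.inl ⟨i, mem_farNormals.2 ⟨hip, fun l _ => ?_⟩⟩
    exact h.gram_eq_zero_of_timelike hqq (fun hil => hip (hil ▸ C.orth l _)) hiq (hqσ l)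
  · refine Or.inr fun l => ?_
    have hq0 : q ≠ 0 := by
      rintro rfl
      simp at hqp
    obtain ⟨j, -, d, hd, hsum⟩ := h.exists_opposite hq hqq hq0 (hqσ l)
    have hj : e j = d • q - e (a l (σ l)) := eq_sub_of_add_eq' hsum
    refine ⟨j, mem_farNormals.2 ⟨?_, fun m hm => ?_⟩, ?_⟩
    · rw [hj, mink_sub_left, mink_smul_left, C.orth, sub_zero]
      exact mul_ne_zero hd.ne' hqp.ne
    · rw [hj, mink_sub_left, mink_smul_left, mink_comm q, hqσ,
        C.cross l m (by simpa [eq_comm] using hm), mul_zero, sub_zero]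
    · rw [mink_comm, h.gram_eq_neg_one_of_add_eq_smul (hqσ l) hsum]

lemma farNormals_compl_singleton_nonempty [Fintype κ] [DecidableEq κ] (C : Cusp e p a c)
    (h : RightAngledSystem e y) (l : κ) (σ : κ → Bool) :
    (farNormals e p a {l}ᶜ σ).Nonempty := by
  rcases C.corner h σ with hfin | hideal
  · exact hfin.mono (farNormals_anti (Finset.subset_univ _))
  · obtain ⟨i, hi, -⟩ := hideal l
    exact ⟨i, hi⟩

variable [Fintype κ] [DecidableEq κ]

lemma le_card_farNormals_of_base (C : Cusp e p a c) {k N : ℕ}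
    (hbase : ∀ (D : Finset κ) (σ : κ → Bool), Dᶜ.card = k → N ≤ (farNormals e p a D σ).card)
    (d : ℕ) (D : Finset κ) (σ : κ → Bool) (hD : Dᶜ.card = d + k) :
    N * 2 ^ d ≤ (farNormals e p a D σ).card := by
  induction d generalizing D σ with
  | zero => simpa using hbase D σ (by simpa using hD)
  | succ d ih =>
    obtain ⟨l, hl⟩ : Dᶜ.Nonempty := Finset.card_pos.1 (by omega)
    rw [Finset.mem_compl] at hl
    have hins : (insert l D)ᶜ.card = d + k := card_compl_insert hl (by omega)
    have hsplit := C.card_split hl σ (Finset.empty_subset _) (by simp)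
    have htrue := ih _ (Function.update σ l true) hins
    have hfalse := ih _ (Function.update σ l false) hins
    rw [Finset.card_empty] at hsplit
    rw [pow_succ, ← mul_assoc]
    omega

lemma two_pow_le_card_farNormals (C : Cusp e p a c) (h : RightAngledSystem e y) (d : ℕ)
    (D : Finset κ) (σ : κ → Bool) (hD : Dᶜ.card = d + 1) :
    2 ^ d ≤ (farNormals e p a D σ).card := by
  rw [← one_mul (2 ^ d)]
  refine C.le_card_farNormals_of_base (k := 1) (fun D σ hD => ?_) d D σ hD
  obtain ⟨l, hl⟩ := Finset.card_eq_one.1 hD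
  rw [← compl_compl D, hl]
  exact Finset.card_pos.2 (C.farNormals_compl_singleton_nonempty h l σ)

lemma card_farNormals_insert_le (C : Cusp e p a c) (h : RightAngledSystem e y) {d : ℕ}
    (hD : Dᶜ.card = d + 2) (hle : (farNormals e p a D σ).card ≤ 2 ^ (d + 1)) (hl : l ∉ D) :
    (farNormals e p a (insert l D) σ).card ≤ 2 ^ d := by
  have hins : (insert l D)ᶜ.card = d + 1 := card_compl_insert hl hD
  have hsplit := C.card_split hl σ (Finset.empty_subset _) (by simp)
  have htrue := C.two_pow_le_card_farNormals h d _ (Function.update σ l true) hins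
  have hfalse := C.two_pow_le_card_farNormals h d _ (Function.update σ l false) hins
  rw [Finset.card_empty] at hsplit
  rw [pow_succ] at hle
  rw [← Function.update_eq_self l σ]
  cases σ l <;> omega

lemma card_farNormals_compl_singleton_le_one (C : Cusp e p a c) (h : RightAngledSystem e y)
    {d : ℕ} (hD : Dᶜ.card = d + 1) (hle : (farNormals e p a D σ).card ≤ 2 ^ d) (hl : l ∉ D) :
    (farNormals e p a {l}ᶜ σ).card ≤ 1 := by
  induction d generalizing D with
  | zero =>
    obtain ⟨m, hm⟩ := Finset.card_eq_one.1 hD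
    have hlm : l = m := by simpa [hm] using Finset.mem_compl.2 hl
    rwa [hlm, ← hm, compl_compl]
  | succ d ih =>
    obtain ⟨m, hm, hml⟩ := Finset.exists_mem_ne (by omega : 1 < Dᶜ.card) l
    rw [Finset.mem_compl] at hm
    exact ih (card_compl_insert hm hD) (C.card_farNormals_insert_le h hD hle hm)
      (by simp [hl, hml.symm])

lemma exists_orth_of_card_le (C : Cusp e p a c) (h : RightAngledSystem e y) {d : ℕ}
    (hD : Dᶜ.card = d + 2) (hle : (farNormals e p a D σ).card ≤ 2 ^ (d + 1))
    (hi : i ∈ farNormals e p a D σ) (hl : l ∉ D) : ∃ b, mink (e i) (e (a l b)) = 0 := by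
  by_contra! hne
  have hins : (insert l D)ᶜ.card = d + 1 := card_compl_insert hl hD
  have hsplit := C.card_split hl σ (Finset.singleton_subset_iff.2 hi) (by simpa using hne)
  have htrue := C.two_pow_le_card_farNormals h d _ (Function.update σ l true) hins
  have hfalse := C.two_pow_le_card_farNormals h d _ (Function.update σ l false) hins
  rw [Finset.card_singleton] at hsplit
  rw [pow_succ] at hle
  omega

/-- In a face with the least possible number of far facets, each far facet passes through a
vertex adjacent to `p`. -/
lemma exists_mem_farNormals_univ (C : Cusp e p a c) (h : RightAngledSystem e y) {d : ℕ}
    (hD : Dᶜ.card = d + 2) (hle : (farNormals e p a D σ).card ≤ 2 ^ (d + 1))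
    (hi : i ∈ farNormals e p a D σ) :
    ∃ τ : κ → Bool, (∀ l ∈ D, τ l = σ l) ∧ i ∈ farNormals e p a Finset.univ τ := by
  have horth : ∀ l, ∃ b, (l ∈ D → b = σ l) ∧ mink (e i) (e (a l b)) = 0 := fun l => by
    by_cases hl : l ∈ D
    · exact ⟨σ l, fun _ => rfl, (mem_farNormals.1 hi).2 l hl⟩
    · obtain ⟨b, hb⟩ := C.exists_orth_of_card_le h hD hle hi hl
      exact ⟨b, fun hl' => absurd hl' hl, hb⟩
  choose τ hτD hτ using horth
  exact ⟨τ, hτD, mem_farNormals.2 ⟨(mem_farNormals.1 hi).1, fun l _ => hτ l⟩⟩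

lemma mink_eq_neg_one_of_card_le (C : Cusp e p a c) (h : RightAngledSystem e y) {d : ℕ}
    (hD : Dᶜ.card = d + 1) (hle : (farNormals e p a D σ).card ≤ 2 ^ d)
    (hi : i ∈ farNormals e p a Finset.univ σ) (hl : l ∉ D) :
    mink (e i) (e (a l !σ l)) = -1 := by
  set τ := Function.update σ l (!σ l)
  have hτl : τ l = !σ l := Function.update_self ..
  have hcongr : farNormals e p a {l}ᶜ τ = farNormals e p a {l}ᶜ σ :=
    farNormals_congr fun m hm => Function.update_of_ne (by simpa using hm) _ _
  have hiσ := mem_farNormals.1 hi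
  have hunique : ∀ j ∈ farNormals e p a {l}ᶜ τ, j = i := fun j hj =>
    Finset.card_le_one.1 (C.card_farNormals_compl_singleton_le_one h hD hle hl) j (hcongr ▸ hj) i
      (farNormals_anti (Finset.subset_univ _) hi)
  rcases C.corner h τ with ⟨j, hj⟩ | hideal
  · rw [hunique j (farNormals_anti (Finset.subset_univ _) hj), mem_farNormals] at hj
    refine (C.not_orth_both hiσ.1 (hiσ.2 l (Finset.mem_univ l)) ?_).elim
    rw [← hτl]
    exact hj.2 l (Finset.mem_univ l)
  · obtain ⟨j, hj, hj1⟩ := hideal l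
    rwa [hunique j hj, hτl] at hj1

end Links

end Cusp

/-! ### The centre of the cube below an ideal vertex -/

section CubeCentre

variable {n : ℕ} {κ : Type*} {E q v x : Fin (n + 1) → ℝ} {u : κ → Fin (n + 1) → ℝ}

/-- The configuration at a finite vertex adjacent to the ideal vertex `q`: an orthonormal family
of walls `u l` through `q` and a wall `E` orthogonal to them, with `q` scaled so that
`⟨E, q⟩ = -1`. The walls opposite to the `u l` at `q` then have normals `q - u l`. -/
structure VertexFrame (E q : Fin (n + 1) → ℝ) (u : κ → Fin (n + 1) → ℝ) : Prop where
  unit : mink E E = 1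
  null : mink q q = 0
  mink_eq_neg_one : mink E q = -1
  unit_wall : ∀ l, mink (u l) (u l) = 1
  pairwise_orth : Pairwise fun l m => mink (u l) (u m) = 0
  orth : ∀ l, mink E (u l) = 0
  orth_null : ∀ l, mink q (u l) = 0

variable [Fintype κ]

lemma mink_sum_smul_eq_zero (hx : ∀ l, mink x (u l) = 0) (β : κ → ℝ) :
    mink x (∑ l, β l • u l) = 0 := by
  rw [mink_sum_right]
  exact Finset.sum_eq_zero fun l _ => by rw [mink_smul_right, hx, mul_zero]

/-- In the upper half-space model with `q` at infinity, `E` is the unit hemisphere about a vertex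
of the unit cube bounded by the walls `u l`, `q - u l`, and this null vector is the centre of that
cube. -/
def cubeCentre (E q : Fin (n + 1) → ℝ) (u : κ → Fin (n + 1) → ℝ) : Fin (n + 1) → ℝ :=
  E + ((4 + Fintype.card κ) / 8 : ℝ) • q - ∑ l, (1 / 2 : ℝ) • u l

lemma mink_cubeCentre_eq_zero (hE : mink x E = 0) (hq : mink x q = 0)
    (hu : ∀ l, mink x (u l) = 0) : mink x (cubeCentre E q u) = 0 := by
  rw [cubeCentre, mink_sub_right, mink_add_right, mink_smul_right, hE, hq,
    mink_sum_smul_eq_zero hu]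
  ring

namespace VertexFrame

lemma mink_sum_smul (F : VertexFrame E q u) (β : κ → ℝ) (l : κ) :
    mink (u l) (∑ m, β m • u m) = β l := by
  rw [mink_sum_right, Finset.sum_eq_single_of_mem l (Finset.mem_univ l), mink_smul_right,
    F.unit_wall, mul_one]
  intro m _ hml
  rw [mink_smul_right, F.pairwise_orth hml.symm, mul_zero]

lemma mink_sum_smul_self (F : VertexFrame E q u) (β : κ → ℝ) :
    mink (∑ l, β l • u l) (∑ l, β l • u l) = ∑ l, β l ^ 2 := by
  rw [mink_sum_left]
  exact Finset.sum_congr rfl fun l _ => by rw [mink_smul_left, F.mink_sum_smul, sq]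

lemma mink_cusp_cubeCentre (F : VertexFrame E q u) : mink q (cubeCentre E q u) = -1 := by
  rw [cubeCentre, mink_sub_right, mink_add_right, mink_smul_right, mink_comm q E,
    F.mink_eq_neg_one, F.null, mink_sum_smul_eq_zero F.orth_null]
  ring

lemma mink_wall_cubeCentre (F : VertexFrame E q u) (l : κ) :
    mink (u l) (cubeCentre E q u) = -(1 / 2) := by
  rw [cubeCentre, mink_sub_right, mink_add_right, mink_smul_right, mink_comm (u l) E, F.orth,
    mink_comm (u l) q, F.orth_null, F.mink_sum_smul]
  ring

lemma cubeCentre_null (F : VertexFrame E q u) :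
    mink (cubeCentre E q u) (cubeCentre E q u) = 0 := by
  set S := ∑ l, (1 / 2 : ℝ) • u l with hS
  have hE : mink E S = 0 := mink_sum_smul_eq_zero F.orth _
  have hq : mink q S = 0 := mink_sum_smul_eq_zero F.orth_null _
  have hSS : mink S S = Fintype.card κ * (1 / 2) ^ 2 := by
    rw [hS, F.mink_sum_smul_self, Finset.sum_const, Finset.card_univ, nsmul_eq_mul]
  simp only [cubeCentre, ← hS, mink_sub_left, mink_sub_right, mink_add_left, mink_add_right,
    mink_smul_left, mink_smul_right, mink_comm q E, mink_comm S E, mink_comm S q, F.unit, F.null,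
    F.mink_eq_neg_one, hE, hq, hSS]
  ring

/-- The centre of a unit `k`-cube is at distance `√k / 2` from its vertices, so the unit
hemispheres centred at them leave it uncovered when `k > 4`. -/
lemma mink_cubeCentre_le (F : VertexFrame E q u) (hv : mink v v = 1) (hvq : mink v q = -1)
    (hvu : ∀ l, mink v (u l) = 0 ∨ mink v (u l) = -1) :
    mink v (cubeCentre E q u) ≤ (4 - Fintype.card κ) / 8 := by
  set β : κ → ℝ := fun l => mink v (u l)
  have hβ : ∀ l, β l ^ 2 = -β l := fun l => by
    rcases hvu l with h | h <;> simp [β, h]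
  set S := ∑ l, β l • u l with hS
  have hq0 : q ≠ 0 := by
    rintro rfl
    simp at hvq
  have hSS : mink S S = -∑ l, β l := by
    rw [hS, F.mink_sum_smul_self, ← Finset.sum_neg_distrib, Finset.sum_congr rfl fun l _ => hβ l]
  have hvS : mink v S = -∑ l, β l := by
    rw [hS, mink_sum_right, ← Finset.sum_neg_distrib]
    exact Finset.sum_congr rfl fun l _ => by rw [mink_smul_right, ← hβ, sq]
  have hES : mink E S = 0 := mink_sum_smul_eq_zero F.orth β
  have hqS : mink q S = 0 := mink_sum_smul_eq_zero F.orth_null β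
  have hnonneg := mink_self_nonneg_of_orth_causal F.null.le hq0 (y := v - E - S) (by
    rw [mink_sub_right, mink_sub_right, mink_comm q v, mink_comm q E, hvq, F.mink_eq_neg_one, hqS]
    ring)
  simp only [mink_sub_left, mink_sub_right, mink_comm E v, mink_comm S v, mink_comm S E, hv,
    F.unit, hES, hvS, hSS] at hnonneg
  rw [cubeCentre, mink_sub_right, mink_add_right, mink_smul_right, hvq, mink_sum_right]
  simp only [mink_smul_right, ← Finset.mul_sum]
  linarith

end VertexFrame

end CubeCentre

namespace Cusp

section Faces

variable {n : ℕ} {ι κ : Type*} [Fintype ι] [Fintype κ] [DecidableEq κ] {e : ι → Fin (n + 1) → ℝ}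
  {y p : Fin (n + 1) → ℝ} {a : κ → Bool → ι} {c : κ → ℝ} {D : Finset κ} {σ : κ → Bool} {d : ℕ}
  {i j : ι} {l l₀ : κ}

lemma mink_eq_zero_or_neg_one (C : Cusp e p a c) (h : RightAngledSystem e y)
    (hD : Dᶜ.card = d + 2) (hle : (farNormals e p a D σ).card ≤ 2 ^ (d + 1))
    (hi : i ∈ farNormals e p a D σ) (hl : l ∉ D) (b : Bool) :
    mink (e i) (e (a l b)) = 0 ∨ mink (e i) (e (a l b)) = -1 := by
  obtain ⟨τ, hτ, hiτ⟩ := C.exists_mem_farNormals_univ h hD hle hi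
  rw [← farNormals_congr hτ] at hle
  by_cases hb : b = τ l
  · exact Or.inl (hb ▸ (mem_farNormals.1 hiτ).2 l (Finset.mem_univ l))
  · exact Or.inr (Bool.eq_not.2 hb ▸ C.mink_eq_neg_one_of_card_le h hD hle hiτ hl)

lemma coeff_mul_mink_eq_neg_one (C : Cusp e p a c) (h : RightAngledSystem e y)
    (hD : Dᶜ.card = d + 2) (hle : (farNormals e p a D σ).card ≤ 2 ^ (d + 1))
    (hi : i ∈ farNormals e p a D σ) (hl : l ∉ D) : c l * mink (e i) p = -1 := by
  obtain ⟨τ, hτ, hiτ⟩ := C.exists_mem_farNormals_univ h hD hle hi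
  rw [← farNormals_congr hτ] at hle
  rw [← C.mink_add l (τ l), C.mink_eq_neg_one_of_card_le h hD hle hiτ hl,
    (mem_farNormals.1 hiτ).2 l (Finset.mem_univ l), zero_add]

/-- The normals of the facets at `p` chosen by `σ` among those not fixed by `D`. -/
def freeNormals (e : ι → Fin (n + 1) → ℝ) (a : κ → Bool → ι) (D : Finset κ) (σ : κ → Bool) :
    {l // l ∉ D} → Fin (n + 1) → ℝ :=
  fun l => e (a l (σ l))

lemma vertexFrame (C : Cusp e p a c) (h : RightAngledSystem e y)
    (hD : Dᶜ.card = d + 2) (hle : (farNormals e p a D σ).card ≤ 2 ^ (d + 1))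
    (hi : i ∈ farNormals e p a Finset.univ σ) (hl₀ : l₀ ∉ D) :
    VertexFrame (e i) (c l₀ • p) (freeNormals e a D σ) where
  unit := h.unit i
  null := by rw [mink_smul_left, mink_smul_right, C.null, mul_zero, mul_zero]
  mink_eq_neg_one := by
    rw [mink_smul_right, C.coeff_mul_mink_eq_neg_one h hD hle
      (farNormals_anti (Finset.subset_univ D) hi) hl₀]
  unit_wall l := h.unit _
  pairwise_orth l m hlm := C.cross l m (Subtype.coe_ne_coe.2 hlm) _ _
  orth l := (mem_farNormals.1 hi).2 l (Finset.mem_univ _)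
  orth_null l := by rw [mink_smul_left, freeNormals, C.orth', mul_zero]

lemma mink_cubeCentre_eq_zero_of_mem (C : Cusp e p a c)
    (hi : i ∈ farNormals e p a Finset.univ σ) (hl : l ∈ D) :
    mink (e (a l (σ l))) (cubeCentre (e i) (c l₀ • p) (freeNormals e a D σ)) = 0 := by
  refine mink_cubeCentre_eq_zero ?_ ?_ fun m => ?_
  · rw [mink_comm, (mem_farNormals.1 hi).2 l (Finset.mem_univ l)]
  · rw [mink_smul_right, C.orth, mul_zero]
  · exact C.cross l m (ne_of_mem_of_not_mem hl m.2) _ _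

lemma mink_cubeCentre_eq_neg_half (C : Cusp e p a c) (h : RightAngledSystem e y)
    (hD : Dᶜ.card = d + 2) (hle : (farNormals e p a D σ).card ≤ 2 ^ (d + 1))
    (hi : i ∈ farNormals e p a Finset.univ σ) (hl₀ : l₀ ∉ D) (hl : l ∉ D) (b : Bool) :
    mink (e (a l b)) (cubeCentre (e i) (c l₀ • p) (freeNormals e a D σ)) = -(1 / 2) := by
  have F := C.vertexFrame h hD hle hi hl₀
  have hiD := farNormals_anti (Finset.subset_univ D) hi
  have hwall := F.mink_wall_cubeCentre ⟨l, hl⟩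
  rw [freeNormals] at hwall
  by_cases hb : b = σ l
  · rw [hb, hwall]
  · have hcl : c l = c l₀ := mul_right_cancel₀ (mem_farNormals.1 hi).1
      ((C.coeff_mul_mink_eq_neg_one h hD hle hiD hl).trans
        (C.coeff_mul_mink_eq_neg_one h hD hle hiD hl₀).symm)
    have hcusp := F.mink_cusp_cubeCentre
    rw [mink_smul_left, mink_comm] at hcusp
    have hsum := C.mink_add l (σ l) (cubeCentre (e i) (c l₀ • p) (freeNormals e a D σ))
    rw [mink_comm _ (e (a l (σ l))), hwall, hcl, hcusp] at hsum
    rw [Bool.eq_not.2 hb, mink_comm]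
    linarith

lemma mink_cubeCentre_neg_or (C : Cusp e p a c) (h : RightAngledSystem e y) (hd : 3 ≤ d)
    (hD : Dᶜ.card = d + 2) (hle : (farNormals e p a D σ).card ≤ 2 ^ (d + 1))
    (hi : i ∈ farNormals e p a Finset.univ σ) (hl₀ : l₀ ∉ D) (j : ι) :
    mink (e j) (cubeCentre (e i) (c l₀ • p) (freeNormals e a D σ)) < 0 ∨
      ∃ l ∈ D, j = a l (σ l) ∨ mink (e (a l (σ l))) (e j) ≤ -1 := by
  by_cases hjp : mink (e j) p = 0
  · obtain ⟨l, b, rfl⟩ := C.exhaust j hjp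
    by_cases hl : l ∈ D
    · refine Or.inr ⟨l, hl, ?_⟩
      by_cases hb : b = σ l
      · exact Or.inl (hb ▸ rfl)
      · exact Or.inr (Bool.eq_not.2 hb ▸ (C.opp h l (σ l)).le)
    · left
      rw [C.mink_cubeCentre_eq_neg_half h hD hle hi hl₀ hl]
      norm_num
  by_cases hj : j ∈ farNormals e p a D σ
  · left
    have hbound := (C.vertexFrame h hD hle hi hl₀).mink_cubeCentre_le (h.unit j)
      (by rw [mink_smul_right, C.coeff_mul_mink_eq_neg_one h hD hle hj hl₀])
      fun l => C.mink_eq_zero_or_neg_one h hD hle hj l.2 _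
    rw [Fintype.card_subtype_compl, Fintype.card_coe, ← Finset.card_compl, hD] at hbound
    have : (3 : ℝ) ≤ d := by exact_mod_cast hd
    push_cast at hbound
    linarith
  · right
    obtain ⟨l, hl, hne⟩ : ∃ l ∈ D, mink (e j) (e (a l (σ l))) ≠ 0 := by
      by_contra! horth
      exact hj (mem_farNormals.2 ⟨hjp, horth⟩)
    rw [mink_comm] at hne
    have hlj : a l (σ l) ≠ j := fun hlj => hjp (hlj ▸ C.orth l _)
    exact ⟨l, hl, Or.inr ((h.gram _ _ hlj).resolve_left hne)⟩

lemma cubeCentre_mem_futureCone (C : Cusp e p a c) (h : RightAngledSystem e y)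
    (hD : Dᶜ.card = d + 2) (hle : (farNormals e p a D σ).card ≤ 2 ^ (d + 1))
    (hi : i ∈ farNormals e p a Finset.univ σ) (hl₀ : l₀ ∉ D) :
    cubeCentre (e i) (c l₀ • p) (freeNormals e a D σ) ∈ futureCone n := by
  have F := C.vertexFrame h hD hle hi hl₀
  refine mem_futureCone_of_mink_neg F.cubeCentre_null.le (h.cone_subset C.mem) ?_
  have hcusp := F.mink_cusp_cubeCentre
  rw [mink_smul_left, mink_comm] at hcusp
  nlinarith [C.pos l₀]

lemma cubeCentre_mem_polyhedralCone (C : Cusp e p a c) (h : RightAngledSystem e y) (hd : 3 ≤ d)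
    (hD : Dᶜ.card = d + 2) (hle : (farNormals e p a D σ).card ≤ 2 ^ (d + 1))
    (hi : i ∈ farNormals e p a Finset.univ σ) (hl₀ : l₀ ∉ D) :
    cubeCentre (e i) (c l₀ • p) (freeNormals e a D σ) ∈ polyhedralCone e := fun j => by
  rcases C.mink_cubeCentre_neg_or h hd hD hle hi hl₀ j with hj | ⟨l, hl, rfl | hj⟩
  · exact hj.le
  · exact (C.mink_cubeCentre_eq_zero_of_mem hi hl).le
  · exact h.mink_nonpos_of_mink_eq_zero hj (C.cubeCentre_mem_futureCone h hD hle hi hl₀)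
      (C.mink_cubeCentre_eq_zero_of_mem hi hl)

lemma mink_eq_zero_of_mink_cubeCentre_eq_zero (C : Cusp e p a c) (h : RightAngledSystem e y)
    (hd : 3 ≤ d) (hD : Dᶜ.card = d + 2) (hle : (farNormals e p a D σ).card ≤ 2 ^ (d + 1))
    (hi : i ∈ farNormals e p a Finset.univ σ) (hl₀ : l₀ ∉ D) {z : Fin (n + 1) → ℝ}
    (hwz : mink (cubeCentre (e i) (c l₀ • p) (freeNormals e a D σ)) z = 0)
    (hzD : ∀ l ∈ D, mink (e (a l (σ l))) z = 0)
    (hj : mink (e j) (cubeCentre (e i) (c l₀ • p) (freeNormals e a D σ)) = 0) :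
    mink (e j) z = 0 := by
  rcases C.mink_cubeCentre_neg_or h hd hD hle hi hl₀ j with hneg | ⟨l, hl, rfl | hlj⟩
  · exact (hneg.ne hj).elim
  · exact hzD l hl
  · refine h.mink_eq_zero_of_tangent hlj (C.cubeCentre_mem_futureCone h hD hle hi hl₀) ?_
      (C.mink_cubeCentre_eq_zero_of_mem hi hl) hj hwz (hzD l hl)
    intro hw
    have := (C.vertexFrame h hD hle hi hl₀).mink_cusp_cubeCentre
    rw [hw, mink_zero_right] at this
    norm_num at this

/-- If a face had the least possible number of far facets, the centre of the cube below it would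
lie in the polyhedron together with a direction tangent to the face, contradicting that ideal
points are isolated. -/
lemma two_pow_lt_card_farNormals (C : Cusp e p a c) (h : RightAngledSystem e y) (hd : 3 ≤ d)
    (D : Finset κ) (σ : κ → Bool) (hD : Dᶜ.card = d + 2) :
    2 ^ (d + 1) < (farNormals e p a D σ).card := by
  by_contra! hle
  obtain ⟨i, hi⟩ : (farNormals e p a D σ).Nonempty := Finset.card_pos.1
    (Nat.two_pow_pos _ |>.trans_le (C.two_pow_le_card_farNormals h (d + 1) D σ hD))
  obtain ⟨τ, hτ, hiτ⟩ := C.exists_mem_farNormals_univ h hD hle hi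
  rw [← farNormals_congr hτ] at hle
  obtain ⟨l₁, hl₁, l₂, hl₂, hne⟩ := Finset.one_lt_card.1 (by omega : 1 < Dᶜ.card)
  rw [Finset.mem_compl] at hl₁ hl₂
  have F := C.vertexFrame h hD hle hiτ hl₁
  set w := cubeCentre (e i) (c l₁ • p) (freeNormals e a D τ)
  set z := e (a l₁ (τ l₁)) - e (a l₂ (τ l₂))
  have hw₁ : mink (e (a l₁ (τ l₁))) w = -(1 / 2) := F.mink_wall_cubeCentre ⟨l₁, hl₁⟩
  have hw₂ : mink (e (a l₂ (τ l₂))) w = -(1 / 2) := F.mink_wall_cubeCentre ⟨l₂, hl₂⟩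
  have hzD : ∀ l ∈ D, mink (e (a l (τ l))) z = 0 := fun l hl => by
    rw [mink_sub_right, C.cross l l₁ (ne_of_mem_of_not_mem hl hl₁),
      C.cross l l₂ (ne_of_mem_of_not_mem hl hl₂), sub_zero]
  have hwz : mink w z = 0 := by
    rw [mink_sub_right, mink_comm w, mink_comm w, hw₁, hw₂, sub_self]
  have hzz : mink z z = 2 := by
    simp only [z, mink_sub_left, mink_sub_right, h.unit, C.cross l₁ l₂ hne,
      C.cross l₂ l₁ hne.symm]
    norm_num
  have hzz_nonpos := h.mink_self_nonpos_of_tangent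
    (C.cubeCentre_mem_polyhedralCone h hd hD hle hiτ hl₁) F.cubeCentre_null hwz fun j hj =>
      (C.mink_eq_zero_of_mink_cubeCentre_eq_zero h hd hD hle hiτ hl₁ hwz hzD hj).le
  linarith

end Faces

lemma card_ge {n : ℕ} {ι κ : Type*} [Fintype ι] [Fintype κ] {e : ι → Fin (n + 1) → ℝ}
    {y p : Fin (n + 1) → ℝ} {a : κ → Bool → ι} {c : κ → ℝ} {d : ℕ} (C : Cusp e p a c)
    (h : RightAngledSystem e y) (hκ : Fintype.card κ = d + 5) :
    2 * (d + 5) + 17 * 2 ^ d ≤ Fintype.card ι := by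
  classical
  have hfar := C.le_card_farNormals_of_base (k := 5) (N := 17)
    (fun D σ hD => C.two_pow_lt_card_farNormals h le_rfl D σ hD) d ∅ (fun _ => true)
    (by rw [Finset.compl_empty, Finset.card_univ, hκ])
  set near : Finset ι := Finset.univ.image (Function.uncurry a)
  have hnear : near.card = 2 * (d + 5) := by
    rw [Finset.card_image_of_injective _ (C.injective_uncurry h), Finset.card_univ,
      Fintype.card_prod, hκ, Fintype.card_bool, mul_comm]
  have hdisj : Disjoint near (farNormals e p a ∅ fun _ => true) := by
    rw [Finset.disjoint_left]
    intro i hi hi'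
    obtain ⟨⟨l, b⟩, -, rfl⟩ := Finset.mem_image.1 hi
    exact (mem_farNormals.1 hi').1 (C.orth l b)
  calc 2 * (d + 5) + 17 * 2 ^ d ≤ near.card + (farNormals e p a ∅ fun _ => true).card :=
        Nat.add_le_add hnear.ge hfar
    _ = (near ∪ farNormals e p a ∅ fun _ => true).card :=
        (Finset.card_union_of_disjoint hdisj).symm
    _ ≤ Fintype.card ι := Finset.card_le_univ _

end Cusp

lemma RightAngledSystem.card_ge_of_null {n : ℕ} {ι : Type*} [Fintype ι]
    {e : ι → Fin (n + 1) → ℝ} {y p : Fin (n + 1) → ℝ} (h : RightAngledSystem e y) (hn : 6 ≤ n)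
    (hp : p ∈ polyhedralCone e) (hpp : mink p p = 0) (hp0 : p ≠ 0) :
    2 * (n - 1) + 17 * 2 ^ (n - 6) ≤ Fintype.card ι := by
  classical
  obtain ⟨R, a, c, C⟩ := h.exists_cusp hp hpp hp0
  have hR := C.le_card_add_one h
  have hpow : 2 ^ (n - 6) ≤ 2 ^ (Fintype.card R - 5) :=
    Nat.pow_le_pow_right two_pos (by omega)
  have := C.card_ge h (d := Fintype.card R - 5) (by omega)
  omega

/-! ### Graphs without induced squares -/

section Graph

variable {ι : Type*} {G : SimpleGraph ι} {U : Finset ι} {u : ι} {d : ℕ}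

/-- Cliques in `U` have at most `d` vertices, and those with fewer than `d` vertices have at least
two common neighbours in `U`; the flag triangulations of the `(d - 1)`-sphere are the model case. -/
def IsCliqueSphere (G : SimpleGraph ι) (d : ℕ) (U : Finset ι) : Prop :=
  ∀ T ⊆ U, G.IsClique (T : Set ι) →
    T.card ≤ d ∧ (T.card < d → ∃ i ∈ U, ∃ j ∈ U, i ≠ j ∧ ∀ t ∈ T, G.Adj t i ∧ G.Adj t j)

/-- `G` has no induced cycle of length four: two pairs of non-adjacent vertices are never
completely joined to each other. -/
def NoInducedSquare (G : SimpleGraph ι) : Prop :=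
  ∀ a a' b b', Gᶜ.Adj a a' → Gᶜ.Adj b b' →
    G.Adj a b → G.Adj a b' → G.Adj a' b → G.Adj a' b' → False

lemma card_filter_adj_add_card_filter_compl_adj [DecidableEq ι] [DecidableRel G.Adj]
    (hu : u ∈ U) :
    (U.filter (G.Adj u)).card + (U.filter (Gᶜ.Adj u)).card + 1 = U.card := by
  have hcompl : U.filter (Gᶜ.Adj u) = (U.filter (¬ G.Adj u ·)).erase u := by
    ext x
    simp only [Finset.mem_filter, Finset.mem_erase, SimpleGraph.compl_adj, ne_comm (a := u)]
    tauto
  rw [hcompl, add_assoc, Finset.card_erase_add_one (Finset.mem_filter.2 ⟨hu, G.irrefl⟩),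
    Finset.card_filter_add_card_filter_not]

namespace IsCliqueSphere

lemma one_lt_card (h : IsCliqueSphere G (d + 1) U) : 1 < U.card := by
  obtain ⟨i, hi, j, hj, hij, -⟩ := (h ∅ (Finset.empty_subset U) (by simp)).2 (by simp)
  exact Finset.one_lt_card.2 ⟨i, hi, j, hj, hij⟩

lemma nonempty (h : IsCliqueSphere G (d + 1) U) : U.Nonempty :=
  Finset.card_pos.1 (zero_lt_one.trans h.one_lt_card)

variable [DecidableRel G.Adj]

lemma link (h : IsCliqueSphere G (d + 1) U) (hu : u ∈ U) :
    IsCliqueSphere G d (U.filter (G.Adj u)) := by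
  classical
  intro T hTU hT
  have hTu : ∀ t ∈ T, G.Adj u t := fun t ht => (Finset.mem_filter.1 (hTU ht)).2
  have huT : u ∉ T := fun hu => G.irrefl (hTu u hu)
  obtain ⟨hcard, hext⟩ := h (insert u T)
    (Finset.insert_subset hu (hTU.trans (Finset.filter_subset _ _))) (by
      rw [Finset.coe_insert]
      exact hT.insert fun t ht _ => hTu t ht)
  rw [Finset.card_insert_of_notMem huT] at hcard hext
  refine ⟨by omega, fun hlt => ?_⟩
  obtain ⟨i, hi, j, hj, hij, hadj⟩ := hext (by omega)
  have hadj_u := hadj u (Finset.mem_insert_self _ _)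
  exact ⟨i, Finset.mem_filter.2 ⟨hi, hadj_u.1⟩, j, Finset.mem_filter.2 ⟨hj, hadj_u.2⟩, hij,
    fun t ht => hadj t (Finset.mem_insert_of_mem ht)⟩

lemma filter_adj_eq_empty (h : IsCliqueSphere G 1 U) (hu : u ∈ U) :
    U.filter (G.Adj u) = ∅ := by
  refine Finset.filter_eq_empty_iff.2 fun x hx hadj => ?_
  have := (h.link hu {x} (by simpa using ⟨hx, hadj⟩) (by simp)).1
  simp at this

variable [DecidableEq ι]

/-- Counts the adjacent pairs of a neighbour and a non-neighbour of `u`. Without induced squares the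
common neighbours of `u` and a non-neighbour form a clique. -/
lemma card_filter_adj_le (hG : NoInducedSquare G) (h : IsCliqueSphere G (d + 2) U) (hu : u ∈ U)
    (hlink : ∀ w ∈ U, ∀ x ∈ U.filter (G.Adj w),
      d + 1 ≤ ((U.filter (G.Adj w)).filter (Gᶜ.Adj x)).card) :
    (U.filter (G.Adj u)).card ≤ (U.filter (Gᶜ.Adj u)).card := by
  refine Nat.le_of_mul_le_mul_right (Finset.card_mul_le_card_mul G.Adj ?_ ?_) d.succ_pos
  · intro w hw
    obtain ⟨hwU, hwu⟩ := Finset.mem_filter.1 hw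
    refine (hlink w hwU u (Finset.mem_filter.2 ⟨hu, hwu.symm⟩)).trans_eq (congrArg _ ?_)
    rw [Finset.bipartiteAbove, Finset.filter_comm]
  · intro x hx
    have hux := (Finset.mem_filter.1 hx).2
    refine (h.link hu _ (Finset.filter_subset _ _) fun i hi j hj hij => ?_).1
    simp only [SetLike.mem_coe, Finset.mem_filter] at hi hj
    by_contra hadj
    exact hG u x i j hux ((G.compl_adj i j).2 ⟨hij, hadj⟩) hi.1.2 hj.1.2 hi.2.symm hj.2.symm

lemma card_bounds (hG : NoInducedSquare G) (h : IsCliqueSphere G (d + 1) U) :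
    3 * 2 ^ d ≤ U.card + 1 ∧ ∀ u ∈ U, d + 1 ≤ (U.filter (Gᶜ.Adj u)).card := by
  induction d generalizing U with
  | zero =>
    refine ⟨by simpa [Nat.succ_le_iff] using h.one_lt_card, fun u hu => ?_⟩
    have hsplit := card_filter_adj_add_card_filter_compl_adj (G := G) hu
    rw [h.filter_adj_eq_empty hu, Finset.card_empty] at hsplit
    have := h.one_lt_card
    omega
  | succ d ih =>
    have hle : ∀ u ∈ U, (U.filter (G.Adj u)).card ≤ (U.filter (Gᶜ.Adj u)).card := fun u hu =>
      h.card_filter_adj_le hG hu fun w hw => (ih (h.link hw)).2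
    refine ⟨?_, fun u hu => ?_⟩
    · obtain ⟨u, hu⟩ := h.nonempty
      have hsplit := card_filter_adj_add_card_filter_compl_adj (G := G) hu
      have := hle u hu
      have := (ih (h.link hu)).1
      rw [pow_succ]
      omega
    · have := hle u hu
      have := (ih (h.link hu)).1
      have := d.lt_two_pow_self
      omega

end IsCliqueSphere

end Graph

namespace RightAngledSystem

variable {n : ℕ} {ι : Type*} {e : ι → Fin (n + 1) → ℝ} {x y z : Fin (n + 1) → ℝ} {i j : ι}

/-- The graph of orthogonality among the normals, that is, of adjacency among the facets. -/
def orthGraph (e : ι → Fin (n + 1) → ℝ) : SimpleGraph ι where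
  Adj i j := i ≠ j ∧ mink (e i) (e j) = 0
  symm := ⟨fun _ _ h => ⟨h.1.symm, by rw [mink_comm]; exact h.2⟩⟩
  loopless := ⟨fun _ h => h.1 rfl⟩

lemma pairwise_of_isClique {T : Set ι} (hT : (orthGraph e).IsClique T) :
    T.Pairwise fun i j => mink (e i) (e j) = 0 :=
  hT.mono' fun _ _ h => h.2

lemma gram_le_neg_one_of_compl_adj (h : RightAngledSystem e y) (hij : (orthGraph e)ᶜ.Adj i j) :
    mink (e i) (e j) ≤ -1 :=
  (h.gram i j hij.1).resolve_left fun h0 => hij.2 ⟨hij.1, h0⟩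

lemma add_mem_polyhedralCone (h : RightAngledSystem e y) (hij : mink (e i) (e j) ≤ -1) :
    e i + e j ∈ polyhedralCone e := by
  intro k
  rw [mink_add_right]
  by_cases hi : k = i
  · rw [hi, h.unit]
    linarith
  by_cases hj : k = j
  · rw [hj, h.unit, mink_comm]
    linarith
  linarith [h.gram_nonpos hi, h.gram_nonpos hj]

lemma noInducedSquare (h : RightAngledSystem e y)
    (hnull : ∀ p ∈ polyhedralCone e, mink p p = 0 → p = 0) : NoInducedSquare (orthGraph e) := by
  intro a a' b b' ha hb hab hab' ha'b ha'b'
  have hmem := h.add_mem_polyhedralCone (h.gram_le_neg_one_of_compl_adj ha)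
  have hmem' := h.add_mem_polyhedralCone (h.gram_le_neg_one_of_compl_adj hb)
  have horth : mink (e a + e a') (e b + e b') = 0 := by
    simp [hab.2, hab'.2, ha'b.2, ha'b'.2]
  rcases (h.cone_subset hmem).1.lt_or_eq with hlt | heq
  · exact h.add_ne_zero b b' (eq_zero_of_orth_timelike hlt (h.cone_subset hmem').1 horth)
  · exact h.add_ne_zero a a' (hnull _ hmem heq)

/-- The coordinates of a vector along `x` and along the normals in `T`. -/
def faceCoords (e : ι → Fin (n + 1) → ℝ) (x : Fin (n + 1) → ℝ) (T : Finset ι) :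
    (Fin (n + 1) → ℝ) →ₗ[ℝ] ℝ × (T → ℝ) :=
  (minkBilin n x).prod (LinearMap.pi fun t => minkBilin n (e t))

lemma faceCoords_surjective (h : RightAngledSystem e y) {T : Finset ι}
    (hT : (T : Set ι).Pairwise fun i j => mink (e i) (e j) = 0) (hx : mink x x < 0)
    (hxT : ∀ t ∈ T, mink (e t) x = 0) : Function.Surjective (faceCoords e x T) := by
  rintro ⟨α, β⟩
  refine ⟨(α / mink x x) • x + ∑ t : T, β t • e t, Prod.ext ?_ (funext fun s => ?_)⟩
  · change mink x _ = α
    rw [mink_add_right, mink_smul_right, div_mul_cancel₀ _ hx.ne, mink_sum_right,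
      Finset.sum_eq_zero, add_zero]
    intro t _
    rw [mink_smul_right, mink_comm, hxT t t.2, mul_zero]
  · change mink (e s) _ = β s
    rw [mink_add_right, mink_smul_right, hxT s s.2, mul_zero, zero_add, mink_sum_right,
      Finset.sum_eq_single_of_mem s (Finset.mem_univ s), mink_smul_right, h.unit, mul_one]
    intro t _ hts
    rw [mink_smul_right, hT s.2 t.2 fun h => hts (Subtype.ext h.symm), mul_zero]

/-- A line through `x` inside the face on the facets in `T` leaves the polyhedron through a further
facet, which meets all those in `T`. -/
lemma exists_adj_of_orth [Finite ι] (h : RightAngledSystem e y)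
    (hnull : ∀ p ∈ polyhedralCone e, mink p p = 0 → p = 0) {T : Finset ι}
    (hx : x ∈ polyhedralCone e) (hxx : mink x x < 0) (hxT : ∀ t ∈ T, mink (e t) x = 0)
    (hz : z ≠ 0) (hxz : mink x z = 0) (hzT : ∀ t ∈ T, mink (e t) z = 0) :
    ∃ i, 0 < mink (e i) z ∧ ∀ t ∈ T, (orthGraph e).Adj t i := by
  obtain ⟨s, hmem, i, hi, hi0⟩ := exists_exit hx fun hzc =>
    hz (eq_zero_of_orth_timelike hxx (h.cone_subset hzc).1 hxz)
  have hpairing : mink x (x + s • z) = mink x x := by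
    rw [mink_add_right, mink_smul_right, hxz, mul_zero, add_zero]
  have htimelike : mink (x + s • z) (x + s • z) < 0 := by
    refine lt_of_le_of_ne (h.cone_subset hmem).1 fun h0 => hxx.ne ?_
    rw [← hpairing, hnull _ hmem h0, mink_zero_right]
  refine ⟨i, hi, fun t ht => ?_⟩
  have hti : t ≠ i := by
    rintro rfl
    exact hi.ne' (hzT t ht)
  refine ⟨hti, h.gram_eq_zero_of_timelike htimelike hti ?_ hi0⟩
  rw [mink_add_right, mink_smul_right, hxT t ht, hzT t ht, mul_zero, add_zero]

lemma isCliqueSphere [Fintype ι] (h : RightAngledSystem e y)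
    (hnull : ∀ p ∈ polyhedralCone e, mink p p = 0 → p = 0) :
    IsCliqueSphere (orthGraph e) n Finset.univ := by
  intro T _ hT
  have hTorth := pairwise_of_isClique hT
  have hx := h.facePoint_mem_polyhedralCone hTorth
  have hxx := h.facePoint_timelike hTorth
  have hxT : ∀ t ∈ T, mink (e t) (facePoint e y T) = 0 := fun t =>
    h.mink_facePoint_of_mem hTorth
  refine ⟨?_, fun hlt => ?_⟩
  · have := LinearMap.finrank_le_finrank_of_surjective (h.faceCoords_surjective hTorth hxx hxT)
    simp only [Module.finrank_prod, Module.finrank_self, Module.finrank_pi, Fintype.card_coe,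
      Fintype.card_fin] at this
    omega
  · have hker : LinearMap.ker (faceCoords e (facePoint e y T) T) ≠ ⊥ :=
      LinearMap.ker_ne_bot_of_finrank_lt (by simp; omega)
    obtain ⟨z, hz, hz0⟩ := Submodule.exists_mem_ne_zero_of_ne_bot hker
    have hxz : mink (facePoint e y T) z = 0 := congrArg Prod.fst hz
    have hzT : ∀ t ∈ T, mink (e t) z = 0 := fun t ht => congrFun (congrArg Prod.snd hz) ⟨t, ht⟩
    obtain ⟨i, hi, hiT⟩ := h.exists_adj_of_orth hnull hx hxx hxT hz0 hxz hzT
    obtain ⟨j, hj, hjT⟩ := h.exists_adj_of_orth hnull hx hxx hxT (neg_ne_zero.2 hz0)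
      (by rw [mink_neg_right, hxz, neg_zero])
      fun t ht => by rw [mink_neg_right, hzT t ht, neg_zero]
    refine ⟨i, Finset.mem_univ _, j, Finset.mem_univ _, ?_, fun t ht => ⟨hiT t ht, hjT t ht⟩⟩
    rintro rfl
    rw [mink_neg_right] at hj
    linarith

lemma card_ge [Fintype ι] (h : RightAngledSystem e y) (hn : 6 ≤ n) :
    2 * (n - 1) + 17 * 2 ^ (n - 6) ≤ Fintype.card ι := by
  classical
  by_cases hnull : ∀ p ∈ polyhedralCone e, mink p p = 0 → p = 0
  · obtain ⟨m, rfl⟩ := Nat.exists_eq_add_of_le' hn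
    have hcard := ((h.isCliqueSphere hnull).card_bounds (h.noInducedSquare hnull)).1
    have hpow : m + 1 ≤ 2 ^ m := m.lt_two_pow_self
    rw [Finset.card_univ, pow_add] at hcard
    simp only [Nat.add_sub_cancel]
    omega
  · push Not at hnull
    obtain ⟨p, hp, hpp, hp0⟩ := hnull
    exact h.card_ge_of_null hn hp hpp hp0

end RightAngledSystem

/-! ### The Klein model -/

lemma isExposed_singleton_of_forall_norm_le {E : Type*} [NormedAddCommGroup E]
    [InnerProductSpace ℝ E] {A : Set E} {x : E} (hx : x ∈ A) (h : ∀ z ∈ A, ‖z‖ ≤ ‖x‖) :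
    IsExposed ℝ A {x} := by
  rintro -
  refine ⟨innerSL ℝ x, Set.Subset.antisymm ?_ ?_⟩
  · rw [Set.singleton_subset_iff]
    refine ⟨hx, fun z hz => ?_⟩
    simp only [innerSL_apply_apply, real_inner_self_eq_norm_sq]
    nlinarith [real_inner_le_norm x z, h z hz, norm_nonneg x]
  · rintro z ⟨hz, hmax⟩
    have hinner := hmax x hx
    simp only [innerSL_apply_apply, real_inner_self_eq_norm_sq] at hinner
    have hdist : ‖z - x‖ ^ 2 ≤ 0 := by
      rw [norm_sub_sq_real, real_inner_comm]
      linarith [pow_le_pow_left₀ (norm_nonneg z) (h z hz) 2]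
    rw [Set.mem_singleton_iff, ← sub_eq_zero, ← norm_eq_zero]
    exact pow_eq_zero_iff two_ne_zero |>.1 (le_antisymm hdist (sq_nonneg _))

lemma isExposed_setOf_eq_of_forall_le {E : Type*} [TopologicalSpace E] [AddCommGroup E]
    [Module ℝ E] {A : Set E} (l : StrongDual ℝ E) {c : ℝ} (h : ∀ x ∈ A, l x ≤ c) :
    IsExposed ℝ A {x ∈ A | l x = c} := by
  rintro ⟨x₀, hx₀A, hx₀⟩
  refine ⟨l, Set.ext fun x => and_congr_right fun hx => ⟨?_, fun hmax => ?_⟩⟩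
  · rintro rfl
    exact h
  · exact le_antisymm (h x hx) (hx₀ ▸ hmax x₀ hx₀A)

section Klein

variable {n : ℕ}

/-- The point `(1, x)` of the affine chart `y 0 = 1` over a point `x` of the Klein model. -/
def kleinLift (x : EuclideanSpace ℝ (Fin n)) : Fin (n + 1) → ℝ := Fin.cons 1 fun i => x i

/-- The identification `v ↦ (0, v)` of Euclidean space with the hyperplane `y 0 = 0`, which is the
direction of the chart `kleinLift`. -/
def spatialLift (n : ℕ) : EuclideanSpace ℝ (Fin n) →ₗ[ℝ] (Fin (n + 1) → ℝ) where
  toFun v := Fin.cons 0 fun i => v i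
  map_add' v w := by ext i; refine Fin.cases ?_ (fun j => ?_) i <;> simp
  map_smul' c v := by ext i; refine Fin.cases ?_ (fun j => ?_) i <;> simp

/-- The projection `(y₀, v) ↦ v` that forgets the time coordinate. -/
def spatialPart (n : ℕ) : (Fin (n + 1) → ℝ) →ₗ[ℝ] EuclideanSpace ℝ (Fin n) :=
  (WithLp.linearEquiv 2 ℝ (Fin n → ℝ)).symm.toLinearMap ∘ₗ LinearMap.funLeft ℝ ℝ Fin.succ

@[simp] lemma kleinLift_zero (x : EuclideanSpace ℝ (Fin n)) : kleinLift x 0 = 1 := rfl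

@[simp] lemma kleinLift_succ (x : EuclideanSpace ℝ (Fin n)) (i : Fin n) :
    kleinLift x i.succ = x i := rfl

@[simp] lemma spatialLift_zero (v : EuclideanSpace ℝ (Fin n)) : spatialLift n v 0 = 0 := rfl

@[simp] lemma spatialLift_succ (v : EuclideanSpace ℝ (Fin n)) (i : Fin n) :
    spatialLift n v i.succ = v i := rfl

@[simp] lemma spatialPart_apply (y : Fin (n + 1) → ℝ) (i : Fin n) :
    spatialPart n y i = y i.succ := rfl

@[simp] lemma spatialPart_kleinLift (x : EuclideanSpace ℝ (Fin n)) :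
    spatialPart n (kleinLift x) = x := rfl

lemma spatialLift_spatialPart {y : Fin (n + 1) → ℝ} (h : y 0 = 0) :
    spatialLift n (spatialPart n y) = y := by
  ext i
  refine Fin.cases ?_ (fun j => ?_) i <;> simp [h]

lemma kleinLift_add (x v : EuclideanSpace ℝ (Fin n)) :
    kleinLift (x + v) = kleinLift x + spatialLift n v := by
  ext i
  refine Fin.cases ?_ (fun j => ?_) i <;> simp

lemma kleinLift_eq_add (x : EuclideanSpace ℝ (Fin n)) :
    kleinLift x = kleinLift 0 + spatialLift n x := by
  rw [← kleinLift_add, zero_add]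

lemma spatialLift_sub (x z : EuclideanSpace ℝ (Fin n)) :
    spatialLift n (x - z) = kleinLift x - kleinLift z := by
  rw [kleinLift_eq_add x, kleinLift_eq_add z, map_sub, add_sub_add_left_eq_sub]

lemma kleinLift_combo (x z : EuclideanSpace ℝ (Fin n)) (t : ℝ) :
    kleinLift ((1 - t) • x + t • z) = (1 - t) • kleinLift x + t • kleinLift z := by
  ext i
  refine Fin.cases ?_ (fun j => ?_) i <;> simp

lemma continuous_mink_kleinLift (e : Fin (n + 1) → ℝ) :
    Continuous fun x : EuclideanSpace ℝ (Fin n) => mink e (kleinLift x) := by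
  simp only [mink, kleinLift_zero, kleinLift_succ]
  fun_prop

lemma mink_self_eq_norm (y : Fin (n + 1) → ℝ) :
    mink y y = -(y 0) ^ 2 + ‖spatialPart n y‖ ^ 2 := by
  simp [mink_self_eq, EuclideanSpace.norm_sq_eq]

lemma mem_futureCone_iff {y : Fin (n + 1) → ℝ} : y ∈ futureCone n ↔ ‖spatialPart n y‖ ≤ y 0 := by
  change mink y y ≤ 0 ∧ 0 ≤ y 0 ↔ _
  rw [mink_self_eq_norm]
  refine ⟨fun ⟨h, h0⟩ => le_of_sq_le_sq (neg_add_nonpos_iff.1 h) h0, fun h => ?_⟩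
  have h0 := (norm_nonneg _).trans h
  exact ⟨by linarith [pow_le_pow_left₀ (norm_nonneg _) h 2], h0⟩

lemma mink_kleinLift_self_neg_iff {x : EuclideanSpace ℝ (Fin n)} :
    mink (kleinLift x) (kleinLift x) < 0 ↔ ‖x‖ < 1 := by
  rw [mink_self_eq_norm, spatialPart_kleinLift, kleinLift_zero, ← sq_lt_one_iff₀ (norm_nonneg x)]
  constructor <;> intro h <;> linarith

lemma eq_zero_of_mem_futureCone_of_neg_mem {y : Fin (n + 1) → ℝ} (hy : y ∈ futureCone n)
    (hneg : -y ∈ futureCone n) : y = 0 := by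
  by_contra h0
  have hpos := time_pos_of_mem_futureCone hy h0
  have hneg0 := hneg.2
  rw [Pi.neg_apply] at hneg0
  linarith

lemma kleinLift_kleinMap {y : Fin (n + 1) → ℝ} (h : y 0 ≠ 0) :
    kleinLift (kleinMap y) = (y 0)⁻¹ • y := by
  ext i
  refine Fin.cases ?_ (fun j => ?_) i
  · simp [h]
  · simp [kleinMap, div_eq_inv_mul]

lemma kleinMap_smul_kleinLift {c : ℝ} (hc : c ≠ 0) (x : EuclideanSpace ℝ (Fin n)) :
    kleinMap (c • kleinLift x) = x := by
  ext i
  simp [kleinMap, hc]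

lemma norm_kleinMap {y : Fin (n + 1) → ℝ} (h : 0 < y 0) :
    ‖kleinMap y‖ = ‖spatialPart n y‖ / y 0 := by
  have hsmul : kleinMap y = (y 0)⁻¹ • spatialPart n y := by
    ext i
    simp [kleinMap, div_eq_inv_mul]
  rw [hsmul, norm_smul, norm_inv, Real.norm_eq_abs, abs_of_pos h, div_eq_inv_mul]

lemma inv_sqrt_smul_mem_hyperboloid {y : Fin (n + 1) → ℝ} (hy : mink y y < 0) (h0 : 0 < y 0) :
    (√(-mink y y))⁻¹ • y ∈ Hyperboloid n := by
  have hpos : 0 < -mink y y := neg_pos.2 hy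
  refine ⟨?_, mul_pos (inv_pos.2 (Real.sqrt_pos.2 hpos)) h0⟩
  rw [mink_smul_left, mink_smul_right, ← mul_assoc, ← mul_inv, Real.mul_self_sqrt hpos.le, inv_neg,
    neg_mul, inv_mul_cancel₀ hy.ne]

lemma exists_norm_spatialPart_combo_eq_time {x y : Fin (n + 1) → ℝ}
    (hx : ‖spatialPart n x‖ < x 0) (hy : y ∉ futureCone n) :
    ∃ t ∈ Set.Ico (0 : ℝ) 1,
      ‖spatialPart n ((1 - t) • x + t • y)‖ = ((1 - t) • x + t • y) 0 := by
  set γ : ℝ → Fin (n + 1) → ℝ := fun t => (1 - t) • x + t • y with hγ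
  have hγc : Continuous γ := by fun_prop
  have hcont : Continuous fun t => γ t 0 - ‖spatialPart n (γ t)‖ :=
    ((continuous_apply 0).comp hγc).sub
      ((LinearMap.continuous_of_finiteDimensional _).comp hγc).norm
  have hstart : 0 < γ 0 0 - ‖spatialPart n (γ 0)‖ := by simpa [hγ] using hx
  have hend : γ 1 0 - ‖spatialPart n (γ 1)‖ < 0 := by
    simpa [hγ, mem_futureCone_iff] using hy
  obtain ⟨t, ⟨ht0, ht1⟩, ht⟩ := intermediate_value_Icc' (zero_le_one (α := ℝ)) hcont.continuousOn
    ⟨hend.le, hstart.le⟩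
  refine ⟨t, ⟨ht0, lt_of_le_of_ne ht1 ?_⟩, (sub_eq_zero.1 ht).symm⟩
  rintro rfl
  exact hend.ne ht

end Klein

lemma smul_mem_polyhedralCone {n : ℕ} {ι : Type*} {e : ι → Fin (n + 1) → ℝ} {c : ℝ} (hc : 0 ≤ c)
    {y : Fin (n + 1) → ℝ} (hy : y ∈ polyhedralCone e) : c • y ∈ polyhedralCone e := fun i => by
  rw [mink_smul_right]
  exact mul_nonpos_of_nonneg_of_nonpos hc (hy i)

namespace HypPolyhedron

variable {n : ℕ} (P : HypPolyhedron n)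

lemma kleinMap_image_carrier :
    kleinMap '' P.carrier = {x | ‖x‖ < 1 ∧ kleinLift x ∈ polyhedralCone P.e} := by
  refine Set.Subset.antisymm ?_ fun x ⟨hx, hxP⟩ => ?_
  · rintro _ ⟨y, ⟨⟨hy1, hy0⟩, hy⟩, rfl⟩
    have hinv := inv_pos.2 hy0
    have hlift := kleinLift_kleinMap hy0.ne'
    refine ⟨mink_kleinLift_self_neg_iff.1 ?_, ?_⟩ <;> rw [hlift]
    · rw [mink_smul_left, mink_smul_right, hy1]
      nlinarith [mul_pos hinv hinv]
    · exact smul_mem_polyhedralCone hinv.le hy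
  · have hneg := mink_kleinLift_self_neg_iff.2 hx
    have hc := inv_pos.2 (Real.sqrt_pos.2 (neg_pos.2 hneg))
    exact ⟨_, ⟨inv_sqrt_smul_mem_hyperboloid hneg one_pos, smul_mem_polyhedralCone hc.le hxP⟩,
      kleinMap_smul_kleinLift hc.ne' x⟩

lemma exists_interior_point :
    ∃ x : EuclideanSpace ℝ (Fin n), ‖x‖ < 1 ∧ ∀ i, mink (P.e i) (kleinLift x) < 0 := by
  obtain ⟨x, hx⟩ : (interior (kleinMap '' P.carrier)).Nonempty := P.nonempty_int
  rw [kleinMap_image_carrier] at hx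
  obtain ⟨hx1, hxP⟩ := interior_subset hx
  refine ⟨x, hx1, fun i => lt_of_le_of_ne (hxP i) fun h0 => ?_⟩
  set v := spatialPart n (P.e i) with hv
  have hpos : 0 < mink (P.e i) (spatialLift n v) := by
    have hunit := P.unit i
    have hsq : mink (P.e i) (spatialLift n v) = ∑ j : Fin n, P.e i j.succ ^ 2 := by
      simp [mink, hv, sq]
    rw [mink_self_eq, ← hsq] at hunit
    linarith [sq_nonneg (P.e i 0)]
  have htendsto : Filter.Tendsto (fun ε : ℝ => x + ε • v) (nhdsWithin 0 (Set.Ioi 0)) (nhds x) := by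
    have hcont : Continuous fun ε : ℝ => x + ε • v := by fun_prop
    simpa using (hcont.tendsto 0).mono_left nhdsWithin_le_nhds
  obtain ⟨ε, hε, hε0⟩ := ((htendsto.eventually (mem_interior_iff_mem_nhds.1 hx)).and
    self_mem_nhdsWithin).exists
  have hle := hε.2 i
  rw [kleinLift_add, map_smul, mink_add_right, h0, mink_smul_right, zero_add] at hle
  exact hle.not_gt (mul_pos hε0 hpos)

lemma norm_le_one_of_mem_cl {x : EuclideanSpace ℝ (Fin n)} (hx : x ∈ P.cl) : ‖x‖ ≤ 1 := by
  refine closure_minimal ?_ (isClosed_le continuous_norm continuous_const) hx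
  rw [kleinMap_image_carrier]
  exact fun z hz => hz.1.le

lemma kleinLift_mem_of_mem_cl {x : EuclideanSpace ℝ (Fin n)} (hx : x ∈ P.cl) :
    kleinLift x ∈ polyhedralCone P.e := fun i => by
  refine closure_minimal ?_ (isClosed_le (continuous_mink_kleinLift (P.e i)) continuous_const) hx
  rw [kleinMap_image_carrier]
  exact fun z hz => hz.2 i

lemma mem_cl_of_kleinLift_mem {x : EuclideanSpace ℝ (Fin n)} (hx : ‖x‖ ≤ 1)
    (hxP : kleinLift x ∈ polyhedralCone P.e) : x ∈ P.cl := by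
  obtain ⟨x₀, hx₀, hx₀P⟩ := P.exists_interior_point
  rw [cl, kleinMap_image_carrier]
  have hcont : Continuous fun t : ℝ => (1 - t) • x₀ + t • x := by fun_prop
  have htendsto : Filter.Tendsto (fun t : ℝ => (1 - t) • x₀ + t • x) (nhdsWithin 1 (Set.Iio 1))
      (nhds x) := by
    simpa using (hcont.tendsto 1).mono_left nhdsWithin_le_nhds
  refine mem_closure_of_tendsto htendsto ?_
  filter_upwards [Ioo_mem_nhdsLT one_pos] with t ⟨ht0, ht1⟩
  refine ⟨?_, fun i => ?_⟩
  · refine (norm_add_le _ _).trans_lt ?_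
    rw [norm_smul, norm_smul, Real.norm_of_nonneg ht0.le, Real.norm_of_nonneg (sub_pos.2 ht1).le]
    nlinarith
  · rw [kleinLift_combo, mink_add_right, mink_smul_right, mink_smul_right]
    nlinarith [hxP i, hx₀P i]

lemma mem_verts_of_norm_eq_one {x : EuclideanSpace ℝ (Fin n)} (hx : ‖x‖ = 1)
    (hxP : kleinLift x ∈ polyhedralCone P.e) : x ∈ P.verts :=
  isExposed_singleton_of_forall_norm_le (P.mem_cl_of_kleinLift_mem hx.le hxP) fun _ hz =>
    (P.norm_le_one_of_mem_cl hz).trans hx.ge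

variable {P}

/-- The points of the unit sphere near a common solution of the strict inequalities would be
infinitely many ideal vertices. -/
lemma FiniteVolume.exists_mink_nonneg (hP : P.FiniteVolume) (hn : 2 ≤ n)
    {b : EuclideanSpace ℝ (Fin n)} (hb : ‖b‖ = 1) : ∃ i, 0 ≤ mink (P.e i) (kleinLift b) := by
  by_contra! hneg
  let S := Metric.sphere (0 : EuclideanSpace ℝ (Fin n)) 1
  have hrank : 1 < Module.rank ℝ (EuclideanSpace ℝ (Fin n)) := by
    rw [← Module.finrank_eq_rank, finrank_euclideanSpace_fin]
    exact_mod_cast hn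
  have : ConnectedSpace S :=
    Subtype.connectedSpace (isConnected_sphere hrank (0 : EuclideanSpace ℝ (Fin n)) zero_le_one)
  let b' : S := ⟨b, by simpa [S] using hb⟩
  have : Nontrivial S := ⟨b', -b', (ne_neg_of_mem_unit_sphere ℝ b')⟩
  have hverts : {x : S | (x : EuclideanSpace ℝ (Fin n)) ∈ P.verts} ∈ nhds b' := by
    have hev : ∀ᶠ x : S in nhds b', ∀ i, mink (P.e i) (kleinLift x) < 0 :=
      Filter.eventually_all.2 fun i =>
        (((continuous_mink_kleinLift (P.e i)).comp continuous_subtype_val).tendsto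
          b').eventually_lt_const (hneg i)
    filter_upwards [hev] with x hx
    exact P.mem_verts_of_norm_eq_one (by simp [S]) fun i => (hx i).le
  exact infinite_of_mem_nhds b' hverts (hP.1.preimage Subtype.val_injective.injOn)

lemma FiniteVolume.exists_mink_nonneg_of_null (hP : P.FiniteVolume) (hn : 2 ≤ n)
    {y : Fin (n + 1) → ℝ} (hy : ‖spatialPart n y‖ = y 0) : ∃ i, 0 ≤ mink (P.e i) y := by
  have h0 : 0 ≤ y 0 := hy ▸ norm_nonneg _
  rcases h0.eq_or_lt with h0 | h0
  · obtain ⟨i, -⟩ := hP.exists_mink_nonneg hn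
      (b := EuclideanSpace.single ⟨0, by omega⟩ 1) (by simp)
    have hy0 : y = 0 := by
      rw [← spatialLift_spatialPart h0.symm, norm_eq_zero.1 (hy.trans h0.symm), map_zero]
    exact ⟨i, by simp [hy0]⟩
  · obtain ⟨i, hi⟩ := hP.exists_mink_nonneg hn (b := kleinMap y)
      (by rw [norm_kleinMap h0, hy, div_self h0.ne'])
    rw [kleinLift_kleinMap h0.ne', mink_smul_right] at hi
    exact ⟨i, nonneg_of_mul_nonneg_right hi (inv_pos.2 h0)⟩

lemma FiniteVolume.polyhedralCone_subset (hP : P.FiniteVolume) (hn : 2 ≤ n) :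
    polyhedralCone P.e ⊆ futureCone n := by
  intro y hy
  by_contra hcone
  obtain ⟨x, hx1, hx⟩ := P.exists_interior_point
  obtain ⟨t, ⟨ht0, ht1⟩, ht⟩ :=
    exists_norm_spatialPart_combo_eq_time (x := kleinLift x) (by simpa using hx1) hcone
  obtain ⟨i, hi⟩ := hP.exists_mink_nonneg_of_null hn ht
  rw [mink_add_right, mink_smul_right, mink_smul_right] at hi
  linarith [mul_neg_of_pos_of_neg (sub_pos.2 ht1) (hx i),
    mul_nonpos_of_nonneg_of_nonpos ht0 (hy i)]

lemma FiniteVolume.finite_faces (hP : P.FiniteVolume) (k : ℕ) : (P.faces k).Finite := by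
  have hcompact : IsCompact P.cl := Metric.isCompact_of_isClosed_isBounded isClosed_closure <|
    isBounded_iff_forall_norm_le.2 ⟨1, fun _ => P.norm_le_one_of_mem_cl⟩
  have hconvex : Convex ℝ P.cl := by
    rw [hP.2]
    exact convex_convexHull ℝ _
  have hKreinMilman : ∀ F ∈ P.faces k, closure (convexHull ℝ (F.extremePoints ℝ)) = F :=
    fun F hF => closure_convexHull_extremePoints (hF.1.isCompact hcompact) (hF.1.convex hconvex)
  refine Set.Finite.of_finite_image (f := Set.extremePoints ℝ)
    (hP.1.finite_subsets.subset ?_) fun F hF F' hF' heq => ?_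
  · rintro _ ⟨F, hF, rfl⟩
    refine hF.1.isExtreme.extremePoints_subset_extremePoints.trans ?_
    rw [hP.2]
    exact extremePoints_convexHull_subset
  · rw [← hKreinMilman F hF, ← hKreinMilman F' hF', heq]

lemma mem_cl_iff (hcone : polyhedralCone P.e ⊆ futureCone n) {x : EuclideanSpace ℝ (Fin n)} :
    x ∈ P.cl ↔ kleinLift x ∈ polyhedralCone P.e :=
  ⟨P.kleinLift_mem_of_mem_cl, fun hx =>
    P.mem_cl_of_kleinLift_mem (by simpa using mem_futureCone_iff.1 (hcone hx)) hx⟩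

end HypPolyhedron

/-! ### The faces on the bounding hyperplanes -/

lemma finrank_inf_ker_add_one {K V : Type*} [Field K] [AddCommGroup V] [Module K V]
    [FiniteDimensional K V] {W : Submodule K V} {l : Module.Dual K V} {z : V} (hz : z ∈ W)
    (hlz : l z ≠ 0) :
    Module.finrank K (W ⊓ LinearMap.ker l : Submodule K V) + 1 = Module.finrank K W := by
  have hne : l.domRestrict W ≠ 0 := fun h => hlz (LinearMap.congr_fun h ⟨z, hz⟩)
  rw [← Module.Dual.finrank_ker_add_one_of_ne_zero hne, LinearMap.ker_domRestrict,
    ← Submodule.finrank_map_subtype_eq, Submodule.map_comap_subtype]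

lemma range_spatialLift (n : ℕ) :
    LinearMap.range (spatialLift n) = LinearMap.ker (LinearMap.proj 0) := by
  ext y
  refine ⟨?_, fun hy => ⟨spatialPart n y, spatialLift_spatialPart hy⟩⟩
  rintro ⟨v, rfl⟩
  exact spatialLift_zero v

lemma spatialLift_injective (n : ℕ) : Function.Injective (spatialLift n) := fun v w h => by
  ext i
  simpa using congrFun h i.succ

lemma finrank_comap_spatialLift_add_one {n : ℕ} {W : Submodule ℝ (Fin (n + 1) → ℝ)}
    {z : Fin (n + 1) → ℝ} (hz : z ∈ W) (hz0 : z 0 ≠ 0) :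
    Module.finrank ℝ (W.comap (spatialLift n)) + 1 = Module.finrank ℝ W := by
  rw [(Submodule.equivMapOfInjective _ (spatialLift_injective n) _).finrank_eq,
    Submodule.map_comap_eq, range_spatialLift, inf_comm]
  exact finrank_inf_ker_add_one hz hz0

namespace HypPolyhedron

variable {n : ℕ} (P : HypPolyhedron n)

/-- The linear subspace of `ℝ^{n+1}` cut out by the bounding hyperplanes indexed by `T`. -/
def flat (T : Finset (Fin P.m)) : Submodule ℝ (Fin (n + 1) → ℝ) :=
  ⨅ t ∈ T, LinearMap.ker (minkBilin n (P.e t))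

/-- The part of `P̄` on the bounding hyperplanes indexed by `T`. -/
def faceOn (T : Finset (Fin P.m)) : Set (EuclideanSpace ℝ (Fin n)) :=
  {x ∈ P.cl | kleinLift x ∈ P.flat T}

/-- On the intersection of the hyperplanes indexed by `T`, the polyhedron is defined by the
inequalities indexed by `A`. -/
def Defines (T A : Finset (Fin P.m)) : Prop :=
  ∀ y ∈ P.flat T, (∀ j ∈ A, mink (P.e j) y ≤ 0) → y ∈ polyhedralCone P.e

/-- The inequalities indexed by `S` define the polyhedron on the intersection of the hyperplanes
indexed by `T`, and none of them can be omitted. -/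
structure IsIrredundant (T S : Finset (Fin P.m)) : Prop where
  defines : P.Defines T S
  sep : ∀ k ∈ S, ∃ y ∈ P.flat T, 0 < mink (P.e k) y ∧ ∀ j ∈ S, j ≠ k → mink (P.e j) y ≤ 0

/-- The vector `z` spans a point in the relative interior of the face on the hyperplanes indexed by
`T`, within which the face is defined by the inequalities indexed by `A`. Independence of these
hyperplanes is encoded by the dimension of their intersection. -/
structure IsInterior (T A : Finset (Fin P.m)) (z : Fin (n + 1) → ℝ) : Prop where
  defines : P.Defines T A
  mem_flat : z ∈ P.flat T
  neg : ∀ j ∈ A, mink (P.e j) z < 0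
  finrank_flat : Module.finrank ℝ (P.flat T) + T.card = n + 1

variable {P} {T A S : Finset (Fin P.m)} {i j k : Fin P.m} {z : Fin (n + 1) → ℝ}
  {x : EuclideanSpace ℝ (Fin n)}

lemma mem_flat_iff {y : Fin (n + 1) → ℝ} : y ∈ P.flat T ↔ ∀ t ∈ T, mink (P.e t) y = 0 := by
  simp [flat, Submodule.mem_iInf]

lemma flat_empty : P.flat ∅ = ⊤ := by simp [flat]

lemma flat_insert (k : Fin P.m) (T : Finset (Fin P.m)) :
    P.flat (insert k T) = P.flat T ⊓ LinearMap.ker (minkBilin n (P.e k)) := by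
  rw [flat, Finset.iInf_insert, inf_comm, flat]

lemma isExposed_faceOn (T : Finset (Fin P.m)) : IsExposed ℝ P.cl (P.faceOn T) := by
  induction T using Finset.induction_on with
  | empty => simpa [faceOn, flat_empty] using IsExposed.refl (𝕜 := ℝ) P.cl
  | insert t T _ ih =>
    let l := LinearMap.toContinuousLinearMap (minkBilin n (P.e t) ∘ₗ spatialLift n)
    have hl : ∀ x : EuclideanSpace ℝ (Fin n),
        mink (P.e t) (kleinLift x) = mink (P.e t) (kleinLift 0) + l x := fun x => by
      rw [kleinLift_eq_add x, mink_add_right]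
      rfl
    have hle : ∀ x ∈ P.cl, l x ≤ -mink (P.e t) (kleinLift 0) := fun x hx => by
      linarith [hl x, P.kleinLift_mem_of_mem_cl hx t]
    have hinter : P.faceOn (insert t T) =
        {x ∈ P.cl | l x = -mink (P.e t) (kleinLift 0)} ∩ P.faceOn T := by
      ext x
      have hzero : l x = -mink (P.e t) (kleinLift 0) ↔ mink (P.e t) (kleinLift x) = 0 := by
        rw [hl x, eq_neg_iff_add_eq_zero, add_comm]
      simp only [faceOn, flat_insert, Set.mem_inter_iff, Set.mem_ofPred_eq, Submodule.mem_inf,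
        LinearMap.mem_ker, minkBilin_apply, hzero]
      tauto
    rw [hinter]
    exact (isExposed_setOf_eq_of_forall_le l hle).inter ih

lemma faceInHyperplane_faceOn {t : Fin P.m} (ht : t ∈ T) :
    P.faceInHyperplane (P.e t) (P.faceOn T) := by
  rintro x ⟨⟨-, hx0⟩, -⟩ ⟨-, hxT⟩
  have hzero := mem_flat_iff.1 hxT t ht
  rw [kleinLift_kleinMap hx0.ne', mink_smul_right] at hzero
  exact (mul_eq_zero.1 hzero).resolve_left (inv_ne_zero hx0.ne')

namespace IsInterior

lemma mem_polyhedralCone (h : P.IsInterior T A z) : z ∈ polyhedralCone P.e :=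
  h.defines z h.mem_flat fun j hj => (h.neg j hj).le

lemma smul (h : P.IsInterior T A z) {c : ℝ} (hc : 0 < c) : P.IsInterior T A (c • z) where
  defines := h.defines
  mem_flat := (P.flat T).smul_mem c h.mem_flat
  neg j hj := by
    rw [mink_smul_right]
    exact mul_neg_of_pos_of_neg hc (h.neg j hj)
  finrank_flat := h.finrank_flat

/-- If `z = 0` then no inequality is left on the flat, which is then a linear subspace of the
pointed future cone. -/
lemma ne_zero (h : P.IsInterior T A z) (hcone : polyhedralCone P.e ⊆ futureCone n)
    (hT : T.card ≤ n) : z ≠ 0 := by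
  rintro rfl
  have hA : ∀ y ∈ P.flat T, y ∈ futureCone n := fun y hy =>
    hcone (h.defines y hy fun j hj => by simpa using h.neg j hj)
  have hbot : P.flat T = ⊥ := (Submodule.eq_bot_iff _).2 fun y hy =>
    eq_zero_of_mem_futureCone_of_neg_mem (hA y hy) (hA (-y) (neg_mem hy))
  have hrank := h.finrank_flat
  rw [hbot, finrank_bot] at hrank
  omega

lemma exists_kleinLift (h : P.IsInterior T A z) (hcone : polyhedralCone P.e ⊆ futureCone n)
    (hT : T.card ≤ n) : ∃ x, P.IsInterior T A (kleinLift x) := by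
  have hpos := time_pos_of_mem_futureCone (hcone h.mem_polyhedralCone) (h.ne_zero hcone hT)
  refine ⟨kleinMap z, ?_⟩
  rw [kleinLift_kleinMap hpos.ne']
  exact h.smul (inv_pos.2 hpos)

lemma mem_faceOn (h : P.IsInterior T A (kleinLift x))
    (hcone : polyhedralCone P.e ⊆ futureCone n) : x ∈ P.faceOn T :=
  ⟨(mem_cl_iff hcone).2 h.mem_polyhedralCone, h.mem_flat⟩

lemma vectorSpan_faceOn (h : P.IsInterior T A (kleinLift x))
    (hcone : polyhedralCone P.e ⊆ futureCone n) :
    vectorSpan ℝ (P.faceOn T) = (P.flat T).comap (spatialLift n) := by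
  apply le_antisymm
  · rw [vectorSpan_def, Submodule.span_le]
    rintro _ ⟨y, hy, y', hy', rfl⟩
    simpa [spatialLift_sub] using sub_mem hy.2 hy'.2
  · intro v hv
    obtain ⟨ε, hε, hεA⟩ := exists_pos_forall_add_mul_nonpos A
      (fun j => mink (P.e j) (kleinLift x)) (fun j => mink (P.e j) (spatialLift n v))
      (fun j hj => (h.neg j hj).le) fun j hj h0 => absurd h0 (h.neg j hj).ne
    have hlift : kleinLift (x + ε • v) = kleinLift x + ε • spatialLift n v := by
      rw [kleinLift_add, map_smul]
    have hflat : kleinLift (x + ε • v) ∈ P.flat T := by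
      rw [hlift]
      exact add_mem h.mem_flat ((P.flat T).smul_mem ε hv)
    have hmem : x + ε • v ∈ P.faceOn T := by
      refine ⟨(mem_cl_iff hcone).2 (h.defines _ hflat fun j hj => ?_), hflat⟩
      rw [hlift, mink_add_right, mink_smul_right]
      exact hεA j hj
    have hspan := vsub_mem_vectorSpan ℝ hmem (h.mem_faceOn hcone)
    rw [vsub_eq_sub, add_sub_cancel_left] at hspan
    exact (Submodule.smul_mem_iff _ hε.ne').1 hspan

lemma faceOn_mem_faces (h : P.IsInterior T A (kleinLift x))
    (hcone : polyhedralCone P.e ⊆ futureCone n) : P.faceOn T ∈ P.faces (n - T.card) := by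
  refine ⟨isExposed_faceOn T, ⟨x, h.mem_faceOn hcone⟩, ?_⟩
  have hrank := finrank_comap_spatialLift_add_one h.mem_flat
    ((kleinLift_zero x).trans_ne one_ne_zero)
  have hflat := h.finrank_flat
  rw [sdim, h.vectorSpan_faceOn hcone]
  omega

/-- On the segment from an interior point of a face to a point beyond only its wall `k` lies an
interior point of that wall. -/
lemma descend (h : P.IsInterior T A z) (hS : P.IsIrredundant T S) (hSA : S ⊆ A) (hk : k ∈ S) :
    ∃ z', P.IsInterior (insert k T) (S.erase k) z' := by
  obtain ⟨y, hyT, hyk, hyS⟩ := hS.sep k hk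
  have hkT : k ∉ T := fun hkT => hyk.ne' (mem_flat_iff.1 hyT k hkT)
  refine ⟨mink (P.e k) y • z - mink (P.e k) z • y, fun w hw hwS => ?_, ?_, fun j hj => ?_, ?_⟩
  · rw [flat_insert] at hw
    refine hS.defines w hw.1 fun j hj => ?_
    rcases eq_or_ne j k with rfl | hjk
    · exact hw.2.le
    · exact hwS j (Finset.mem_erase.2 ⟨hjk, hj⟩)
  · rw [flat_insert]
    refine ⟨sub_mem (Submodule.smul_mem _ _ h.mem_flat) (Submodule.smul_mem _ _ hyT), ?_⟩
    simp [mul_comm]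
  · obtain ⟨hjk, hj⟩ := Finset.mem_erase.1 hj
    rw [mink_sub_right, mink_smul_right, mink_smul_right]
    linarith [mul_neg_of_pos_of_neg hyk (h.neg j (hSA hj)),
      mul_nonneg_of_nonpos_of_nonpos (h.neg k (hSA hk)).le (hyS j hj hjk)]
  · have hrank := finrank_inf_ker_add_one (l := minkBilin n (P.e k)) hyT hyk.ne'
    have hflat := h.finrank_flat
    rw [flat_insert, Finset.card_insert_of_notMem hkT]
    omega

end IsInterior

variable (P) in
lemma exists_isInterior_empty : ∃ z, P.IsInterior ∅ Finset.univ z := by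
  obtain ⟨x, -, hx⟩ := P.exists_interior_point
  refine ⟨kleinLift x, fun y _ hy j => hy j (Finset.mem_univ j), ?_, fun j _ => hx j, ?_⟩
  · simp [flat_empty]
  · rw [flat_empty, finrank_top]
    simp

lemma Defines.exists_isIrredundant (h : P.Defines T A) : ∃ S ⊆ A, P.IsIrredundant T S := by
  obtain ⟨S, hSA, hS⟩ := exists_minimal_le_of_wellFoundedLT (P.Defines T) A h
  refine ⟨S, hSA, hS.prop, fun k hk => ?_⟩
  have hnot : ¬ P.Defines T (S.erase k) := hS.not_prop_of_lt (Finset.erase_ssubset hk)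
  simp only [Defines] at hnot
  push Not at hnot
  obtain ⟨y, hyT, hyS, hy⟩ := hnot
  refine ⟨y, hyT, ?_, fun j hj hjk => hyS j (Finset.mem_erase.2 ⟨hjk, hj⟩)⟩
  by_contra! hyk
  refine hy (hS.prop y hyT fun j hj => ?_)
  rcases eq_or_ne j k with rfl | hjk
  · exact hyk
  · exact hyS j (Finset.mem_erase.2 ⟨hjk, hj⟩)

end HypPolyhedron

/-! ### The right-angled system of a polyhedron -/

namespace HypPolyhedron

variable {n : ℕ} {P : HypPolyhedron n} {S S' : Finset (Fin P.m)} {i j k : Fin P.m}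

lemma IsIrredundant.exists_isInterior_singleton (h : P.IsIrredundant ∅ S) (hi : i ∈ S) :
    ∃ z, P.IsInterior {i} (S.erase i) z := by
  obtain ⟨z, hz⟩ := P.exists_isInterior_empty
  simpa using hz.descend h (Finset.subset_univ S) hi

lemma IsIrredundant.card_le (h : P.IsIrredundant ∅ S) (hn : 1 ≤ n) (hP : P.FiniteVolume)
    (hcone : polyhedralCone P.e ⊆ futureCone n) : S.card ≤ P.a (n - 1) := by
  have hinterior : ∀ i ∈ S, ∃ x, P.IsInterior {i} (S.erase i) (kleinLift x) := fun i hi => by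
    obtain ⟨z, hz⟩ := h.exists_isInterior_singleton hi
    exact hz.exists_kleinLift hcone (by simpa using hn)
  rw [a, ← Set.ncard_coe_finset]
  refine Set.ncard_le_ncard_of_injOn (fun i => P.faceOn {i}) (fun i hi => ?_)
    (fun i hi j hj hij => ?_) (hP.finite_faces _)
  · obtain ⟨x, hx⟩ := hinterior i hi
    simpa using hx.faceOn_mem_faces hcone
  · by_contra hne
    obtain ⟨x, hx⟩ := hinterior i hi
    replace hij : P.faceOn {i} = P.faceOn {j} := hij
    have hxj : x ∈ P.faceOn {j} := hij ▸ hx.mem_faceOn hcone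
    exact (hx.neg j (Finset.mem_erase.2 ⟨Ne.symm hne, hj⟩)).ne
      (mem_flat_iff.1 hxj.2 j (Finset.mem_singleton_self j))

lemma IsIrredundant.exists_orthogonal_defines (h : P.IsIrredundant ∅ S) (hn : 2 ≤ n)
    (hcone : polyhedralCone P.e ⊆ futureCone n) (hR : P.IsRightAngled) (hi : i ∈ S) :
    ∃ S' ⊆ S.erase i, (∀ k ∈ S', mink (P.e i) (P.e k) = 0) ∧ P.Defines {i} S' := by
  obtain ⟨z, hz⟩ := h.exists_isInterior_singleton hi
  obtain ⟨S', hS', hirr⟩ := hz.defines.exists_isIrredundant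
  refine ⟨S', hS', fun k hk => ?_, hirr.defines⟩
  have hki : k ≠ i := (Finset.mem_erase.1 (hS' hk)).1
  have hcard : ({k, i} : Finset (Fin P.m)).card = 2 := Finset.card_pair hki
  obtain ⟨w, hw⟩ := hz.descend hirr hS' hk
  obtain ⟨x, hx⟩ := hw.exists_kleinLift hcone (hcard.trans_le hn)
  have hface := hx.faceOn_mem_faces hcone
  rw [hcard] at hface
  exact hR i k hki.symm ⟨_, hface, faceInHyperplane_faceOn (by simp),
    faceInHyperplane_faceOn (by simp)⟩

/-- Project `y` orthogonally to the hyperplane of the facet `i`: this does not change the products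
with the normals in `S'`. -/
lemma Defines.mink_le_mul (h : P.Defines {i} S') (horth : ∀ k ∈ S', mink (P.e i) (P.e k) = 0)
    {y : Fin (n + 1) → ℝ} (hy : ∀ k ∈ S', mink (P.e k) y ≤ 0) (j : Fin P.m) :
    mink (P.e j) y ≤ mink (P.e i) y * mink (P.e j) (P.e i) := by
  have hproj : y - mink (P.e i) y • P.e i ∈ polyhedralCone P.e :=
    h _ (mem_flat_iff.2 (by simp [P.unit])) fun k hk => by
      simpa [mink_comm (P.e k) (P.e i), horth k hk] using hy k hk
  simpa using hproj j

lemma IsIrredundant.mink_nonpos (h : P.IsIrredundant ∅ S) (hn : 2 ≤ n)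
    (hcone : polyhedralCone P.e ⊆ futureCone n) (hR : P.IsRightAngled) (hi : i ∈ S) (hj : j ∈ S)
    (hij : i ≠ j) : mink (P.e i) (P.e j) ≤ 0 := by
  obtain ⟨S', hS', horth, hdef⟩ := h.exists_orthogonal_defines hn hcone hR hi
  by_contra! hpos
  obtain ⟨y, -, hyj, hy⟩ := h.sep j hj
  have hle := hdef.mink_le_mul horth (y := y)
    (fun k hk => hy k (Finset.mem_erase.1 (hS' hk)).2 ?_) j
  · rw [mink_comm (P.e j) (P.e i)] at hle
    linarith [mul_nonpos_of_nonpos_of_nonneg (hy i hi hij) hpos.le]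
  · rintro rfl
    exact hpos.ne' (horth k hk)

lemma IsIrredundant.mink_eq_zero_or_le (h : P.IsIrredundant ∅ S) (hn : 2 ≤ n)
    (hcone : polyhedralCone P.e ⊆ futureCone n) (hR : P.IsRightAngled) (hi : i ∈ S) (hj : j ∈ S)
    (hij : i ≠ j) : mink (P.e i) (P.e j) = 0 ∨ mink (P.e i) (P.e j) ≤ -1 := by
  obtain ⟨S', hS', horth, hdef⟩ := h.exists_orthogonal_defines hn hcone hR hi
  by_cases hjS' : j ∈ S'
  · exact Or.inl (horth j hjS')
  right
  have hle := hdef.mink_le_mul horth (y := P.e j) (fun k hk =>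
    h.mink_nonpos hn hcone hR (Finset.mem_erase.1 (hS' hk)).2 hj (ne_of_mem_of_not_mem hk hjS')) j
  rw [P.unit, mink_comm (P.e j) (P.e i)] at hle
  nlinarith [h.mink_nonpos hn hcone hR hi hj hij]

lemma IsIrredundant.exists_rightAngledSystem (h : P.IsIrredundant ∅ S) (hn : 2 ≤ n)
    (hcone : polyhedralCone P.e ⊆ futureCone n) (hR : P.IsRightAngled) :
    ∃ y, RightAngledSystem (fun i : S => P.e i) y := by
  obtain ⟨x, hx1, hx⟩ := P.exists_interior_point
  exact ⟨kleinLift x,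
    { unit := fun i => P.unit i
      gram := fun i j hij =>
        h.mink_eq_zero_or_le hn hcone hR i.2 j.2 (Subtype.coe_injective.ne hij)
      neg := fun i => hx i
      timelike := mink_kleinLift_self_neg_iff.2 hx1
      cone_subset := fun y hy =>
        hcone (h.defines y (by simp [flat_empty]) fun k hk => hy ⟨k, hk⟩) }⟩

end HypPolyhedron

theorem facets_of_9_and_11_polyhedra_general {n : ℕ} (hn : 6 ≤ n) (P : HypPolyhedron n)
    (hP : P.FiniteVolume) (hR : P.IsRightAngled) :
    2 * (n - 1) + 17 * 2 ^ (n - 6) ≤ P.a (n - 1) := by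
  have hcone := hP.polyhedralCone_subset (by omega)
  obtain ⟨z, hz⟩ := P.exists_isInterior_empty
  obtain ⟨S, -, hS⟩ := hz.defines.exists_isIrredundant
  obtain ⟨y, hy⟩ := hS.exists_rightAngledSystem (by omega) hcone hR
  calc 2 * (n - 1) + 17 * 2 ^ (n - 6)
      ≤ Fintype.card S := hy.card_ge hn
    _ = S.card := Fintype.card_coe S
    _ ≤ P.a (n - 1) := hS.card_le (by omega) hP hcone

/-- Every `9`-dimensional finite-volume right-angled convex hyperbolic polyhedron has at
least `152` facets, and every `11`-dimensional one has at least `564` facets. -/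
theorem facets_of_9_and_11_polyhedra :
    (∀ P : HypPolyhedron 9, P.FiniteVolume → P.IsRightAngled → 152 ≤ P.a 8) ∧
      (∀ P : HypPolyhedron 11, P.FiniteVolume → P.IsRightAngled → 564 ≤ P.a 10) :=
  ⟨facets_of_9_and_11_polyhedra_general (by norm_num),
    facets_of_9_and_11_polyhedra_general (by norm_num)⟩
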